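/- arXiv:1901.08395 — 3 statements merged into one kernel-verified Lean document; each statement's English description precedes it below -/
import Mathlib

section
/- Let U be a contractible open subset of ℂ and let b : U → ℂ⁴ be a real analytic map such that b(z) ≠ 0 and b(z)ᵀ I₁,₃ b(z) = 0 for all z ∈ U. Then there exists a real analytic map A : U → SO⁺(1,3) such that for every z ∈ U the vector A(z)·b(z) lies in the two-dimensional complex subspace spanned by (1,−1,0,0)ᵀ and (0,0,1,i)ᵀ, i.e. A(z)·b(z) has the form (p(z), −p(z), q(z), i q(z))ᵀ for some functions p, q : U → ℂ. (Lemma 4.1 of the paper.) -/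
open Matrix Complex

noncomputable section

/-- The diagonal matrix `diag(-1,1,1,1)` over `ℝ`. -/
def I13 : Matrix (Fin 4) (Fin 4) ℝ := Matrix.diagonal ![-1, 1, 1, 1]

/-- The diagonal matrix `diag(-1,1,1,1)` over `ℂ`. -/
def I13C : Matrix (Fin 4) (Fin 4) ℂ := Matrix.diagonal ![-1, 1, 1, 1]

/-- `SO⁺(1,3)`: real 4×4 matrices with `Aᵀ I₁,₃ A = I₁,₃`, `det A = 1`, `A₀₀ > 0`. -/
def SOplus13 (A : Matrix (Fin 4) (Fin 4) ℝ) : Prop :=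
  Aᵀ * I13 * A = I13 ∧ A.det = 1 ∧ 0 < A 0 0

/-!
A vector `b` is null exactly when its Pauli matrix is singular, and then the kernel of that matrix
is a complex line in `ℂ²` depending analytically on `z`. Over a contractible `U` this line field has
a continuous nowhere vanishing section: carry a vector along the contraction, projecting it
successively onto nearby lines. By Whitney approximation, with a locally finite family of
rapidly decaying Gaussians, the section is close to an analytic function, whose projection back to
the lines is a nowhere vanishing analytic section `w`. Reading `w z` as a spinor, the spin covering
`SU(2) → SO(3)` turns it into a rotation `A z` for which the Pauli matrix of `A z • b z` annihilates
`(1, 0)`; this is the required shape of `A z • b z`.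
-/

open Filter Metric Set Topology
open scoped NNReal

universe u

section AnalyticSeries

variable {𝕜 E F ι : Type*} [NontriviallyNormedField 𝕜] [NormedAddCommGroup E] [NormedSpace 𝕜 E]
  [NormedAddCommGroup F] [NormedSpace 𝕜 F]

theorem summable_norm_coeff_of_summable_prod {p : ι → FormalMultilinearSeries 𝕜 E F} {r : ℝ≥0}
    (hr : 0 < r) (hp : Summable fun q : ι × ℕ => ‖p q.1 q.2‖ * (r : ℝ) ^ q.2) (k : ℕ) :
    Summable fun i => ‖p i k‖ := by
  have hrk : (r : ℝ) ^ k ≠ 0 := by positivity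
  have hk : Summable fun i => ‖p i k‖ * (r : ℝ) ^ k := by
    simpa only [Function.comp_def] using hp.comp_injective (Prod.mk_left_injective k)
  exact (summable_mul_right_iff hrk).mp hk

theorem hasFPowerSeriesOnBall_tsum [CompleteSpace F] {f : ι → E → F}
    {p : ι → FormalMultilinearSeries 𝕜 E F} {x : E} {r : ℝ≥0} (hr : 0 < r)
    (hf : ∀ i, HasFPowerSeriesOnBall (f i) (p i) x r)
    (hp : Summable fun q : ι × ℕ => ‖p q.1 q.2‖ * (r : ℝ) ^ q.2) :
    HasFPowerSeriesOnBall (fun y => ∑' i, f i y) (fun k => ∑' i, p i k) x r where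
  r_le := by
    have hp_swap : Summable fun q : ℕ × ι => ‖p q.2 q.1‖ * (r : ℝ) ^ q.1 := hp.prod_symm
    refine FormalMultilinearSeries.le_radius_of_summable_norm _
      (hp_swap.prod.of_nonneg_of_le (fun k => by positivity) fun k => ?_)
    dsimp only
    rw [tsum_mul_right]
    gcongr
    exact norm_tsum_le_tsum_norm (summable_norm_coeff_of_summable_prod hr hp k)
  r_pos := by simpa using hr
  hasSum := by
    intro y hy
    have hyr : ‖y‖ ≤ r := by
      rw [Metric.mem_eball, edist_zero_right] at hy
      exact mod_cast hy.le
    have hterm (q : ι × ℕ) : ‖p q.1 q.2 fun _ => y‖ ≤ ‖p q.1 q.2‖ * (r : ℝ) ^ q.2 :=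
      ((p q.1 q.2).le_opNorm _).trans (by
        rw [Finset.prod_const, Finset.card_fin]
        gcongr)
    have hsum : Summable fun q : ι × ℕ => p q.1 q.2 fun _ => y := hp.of_norm_bounded hterm
    have hrow : HasSum (fun i => f i (x + y)) (∑' q : ι × ℕ, p q.1 q.2 fun _ => y) :=
      hsum.hasSum.prod_fiberwise fun i => (hf i).hasSum hy
    have hcol (k : ℕ) : HasSum (fun i => p i k fun _ => y) ((∑' i, p i k) fun _ => y) :=
      ContinuousMultilinearMap.hasSum_eval
        (summable_norm_coeff_of_summable_prod hr hp k).of_norm.hasSum _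
    rw [hrow.tsum_eq]
    exact ((Equiv.prodComm ℕ ι).hasSum_iff.mpr hsum.hasSum).prod_fiberwise hcol

end AnalyticSeries

section Exponential

variable {E F ι : Type*} [NormedAddCommGroup E] [NormedSpace ℝ E]
  [NormedAddCommGroup F] [NormedSpace ℝ F]

/-- The Taylor series at the origin of `v ↦ exp (ℓ v) • c`, for a linear form `ℓ`. -/
def expSMulSeries (ℓ : E →L[ℝ] ℝ) (c : F) : FormalMultilinearSeries ℝ E F :=
  (ContinuousLinearMap.toSpanSingleton ℝ c).compFormalMultilinearSeries
    ((NormedSpace.expSeries ℝ ℝ).compContinuousLinearMap ℓ)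

theorem hasFPowerSeriesOnBall_expSMulSeries (ℓ : E →L[ℝ] ℝ) (c : F) :
    HasFPowerSeriesOnBall (fun v => Real.exp (ℓ v) • c) (expSMulSeries ℓ c) 0 ⊤ := by
  have hexp : HasFPowerSeriesOnBall Real.exp (NormedSpace.expSeries ℝ ℝ) (ℓ 0) ⊤ := by
    rw [map_zero, Real.exp_eq_exp_ℝ]
    exact NormedSpace.exp_hasFPowerSeriesOnBall
  have := (ContinuousLinearMap.toSpanSingleton ℝ c).comp_hasFPowerSeriesOnBall
    hexp.compContinuousLinearMap
  rwa [ENNReal.top_div_of_ne_top (by simp)] at this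

theorem norm_expSMulSeries_le (ℓ : E →L[ℝ] ℝ) (c : F) (k : ℕ) :
    ‖expSMulSeries ℓ c k‖ ≤ ‖c‖ * (‖ℓ‖ ^ k / k.factorial) := by
  have hexp : ‖NormedSpace.expSeries ℝ ℝ k‖ = (k.factorial : ℝ)⁻¹ := by
    simp [NormedSpace.expSeries, norm_smul]
  calc ‖expSMulSeries ℓ c k‖
      ≤ ‖ContinuousLinearMap.toSpanSingleton ℝ c‖ *
          ‖(NormedSpace.expSeries ℝ ℝ).compContinuousLinearMap ℓ k‖ :=
        ContinuousLinearMap.norm_compContinuousMultilinearMap_le _ _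
    _ ≤ ‖c‖ * (‖NormedSpace.expSeries ℝ ℝ k‖ * ‖ℓ‖ ^ k) := by
        rw [ContinuousLinearMap.norm_toSpanSingleton]
        gcongr
        exact FormalMultilinearSeries.norm_compContinuousLinearMap_le _ _ _
    _ = ‖c‖ * (‖ℓ‖ ^ k / k.factorial) := by rw [hexp]; ring

theorem analyticAt_tsum_exp_smul [CompleteSpace F] {ℓ : ι → E →L[ℝ] ℝ} {c : ι → F} {η : ℝ}
    (hη : 0 < η) (hs : Summable fun i => ‖c i‖ * Real.exp (η * ‖ℓ i‖)) :
    AnalyticAt ℝ (fun v => ∑' i, Real.exp (ℓ i v) • c i) 0 := by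
  lift η to ℝ≥0 using hη.le
  have hexp (i : ι) : HasSum (fun k : ℕ => ‖c i‖ * (‖ℓ i‖ ^ k / k.factorial) * (η : ℝ) ^ k)
      (‖c i‖ * Real.exp (η * ‖ℓ i‖)) := by
    have := (NormedSpace.expSeries_div_hasSum_exp (η * ‖ℓ i‖)).mul_left ‖c i‖
    rw [← Real.exp_eq_exp_ℝ] at this
    exact this.congr_fun fun k => by rw [mul_pow]; ring
  have hmaj : Summable fun q : ι × ℕ =>
      ‖c q.1‖ * (‖ℓ q.1‖ ^ q.2 / q.2.factorial) * (η : ℝ) ^ q.2 := by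
    rw [summable_prod_of_nonneg fun q => by positivity]
    exact ⟨fun i => (hexp i).summable, hs.congr fun i => (hexp i).tsum_eq.symm⟩
  refine (hasFPowerSeriesOnBall_tsum (mod_cast hη)
    (fun i => (hasFPowerSeriesOnBall_expSMulSeries (ℓ i) (c i)).mono (by simpa using hη) le_top)
    (hmaj.of_nonneg_of_le (fun q => by positivity) fun q => ?_)).analyticAt
  gcongr
  exact norm_expSMulSeries_le _ _ _

end Exponential

section Gaussian

variable {E F ι : Type*} [NormedAddCommGroup E] [InnerProductSpace ℝ E]
  [NormedAddCommGroup F] [NormedSpace ℝ F]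

/-- The linear form on `E × ℝ` taking the value `-N (‖u + h‖² - ‖u‖²)` at `(h, ‖h‖²)`: it makes a
Gaussian the composite of the exponential of a linear form with a fixed quadratic map. -/
def gaussianForm (N : ℝ) (u : E) : E × ℝ →L[ℝ] ℝ :=
  -N • ((2 : ℝ) • (innerSL ℝ u).comp (ContinuousLinearMap.fst ℝ E ℝ) +
    ContinuousLinearMap.snd ℝ E ℝ)

theorem gaussianForm_apply (N : ℝ) (u : E) (v : E × ℝ) :
    gaussianForm N u v = -N * (2 * inner ℝ u v.1 + v.2) :=
  rfl

theorem gaussianForm_apply_sq_norm (N : ℝ) (u h : E) :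
    gaussianForm N u (h, ‖h‖ ^ 2) = -N * (‖u + h‖ ^ 2 - ‖u‖ ^ 2) := by
  rw [gaussianForm_apply, norm_add_sq_real]
  ring

theorem norm_gaussianForm_le {N : ℝ} (hN : 0 ≤ N) (u : E) :
    ‖gaussianForm N u‖ ≤ N * (2 * ‖u‖ + 1) := by
  refine ContinuousLinearMap.opNorm_le_bound _ (by positivity) fun v => ?_
  have hinner : |inner ℝ u v.1| ≤ ‖u‖ * ‖v‖ :=
    (abs_real_inner_le_norm u v.1).trans (by gcongr; exact norm_fst_le v)
  calc ‖gaussianForm N u v‖ = N * |2 * inner ℝ u v.1 + v.2| := by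
        rw [gaussianForm_apply, Real.norm_eq_abs, abs_mul, abs_neg, abs_of_nonneg hN]
    _ ≤ N * (2 * |inner ℝ u v.1| + |v.2|) := by
        gcongr
        exact (abs_add_le _ _).trans (by rw [abs_mul, abs_two])
    _ ≤ N * (2 * (‖u‖ * ‖v‖) + ‖v‖) := by
        gcongr
        exact norm_snd_le v
    _ = N * (2 * ‖u‖ + 1) * ‖v‖ := by ring

theorem exists_pos_mul_add_one_le_sq_sub_sq {ρ : ℝ} (hρ : 0 < ρ) :
    ∃ η > 0, ∀ r d : ℝ, 0 ≤ r → r + ρ ≤ d → η * (2 * d + 1) ≤ d ^ 2 - r ^ 2 := by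
  refine ⟨ρ ^ 2 / (2 * ρ + 1), by positivity, fun r d hr hd => ?_⟩
  calc ρ ^ 2 / (2 * ρ + 1) * (2 * d + 1) ≤ ρ * d := by
        rw [div_mul_eq_mul_div, div_le_iff₀ (by positivity)]
        nlinarith
    _ ≤ d ^ 2 - r ^ 2 := by nlinarith

theorem analyticAt_tsum_gaussian [CompleteSpace F] {s : ι → E} {N r : ι → ℝ} {c : ι → F} {z₀ : E}
    {ρ : ℝ} (hN : ∀ i, 0 ≤ N i) (hr : ∀ i, 0 ≤ r i) (hρ : 0 < ρ)
    (hfar : ∀ᶠ i in cofinite, r i + ρ ≤ dist z₀ (s i))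
    (hc : Summable fun i => Real.exp (-N i * r i ^ 2) * ‖c i‖) :
    AnalyticAt ℝ (fun z => ∑' i, Real.exp (-N i * ‖z - s i‖ ^ 2) • c i) z₀ := by
  obtain ⟨η, hη, hηle⟩ := exists_pos_mul_add_one_le_sq_sub_sq hρ
  set a : ι → F := fun i => Real.exp (-N i * ‖z₀ - s i‖ ^ 2) • c i
  have hsum : Summable fun i => ‖a i‖ * Real.exp (η * ‖gaussianForm (N i) (z₀ - s i)‖) := by
    refine .of_norm_bounded_eventually hc (hfar.mono fun i hi => ?_)
    have hexponent : -N i * ‖z₀ - s i‖ ^ 2 + η * ‖gaussianForm (N i) (z₀ - s i)‖ ≤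
        -N i * r i ^ 2 := by
      rw [dist_eq_norm] at hi
      have hform := mul_le_mul_of_nonneg_left (norm_gaussianForm_le (hN i) (z₀ - s i)) hη.le
      have hfar := mul_le_mul_of_nonneg_left (hηle _ _ (hr i) hi) (hN i)
      linarith
    rw [Real.norm_of_nonneg (by positivity), norm_smul, Real.norm_of_nonneg (Real.exp_nonneg _),
      mul_right_comm, ← Real.exp_add]
    gcongr
  have hquad : AnalyticAt ℝ (fun z => (z - z₀, ‖z - z₀‖ ^ 2)) z₀ := by
    have hsub : AnalyticAt ℝ (fun z => z - z₀) z₀ := analyticAt_id.sub analyticAt_const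
    refine hsub.prod ?_
    simp_rw [← real_inner_self_eq_norm_sq]
    exact (((innerSL ℝ : E →L[ℝ] E →L[ℝ] ℝ).analyticAt_bilinear _).comp (hsub.prod hsub) :)
  have hcomp := (analyticAt_tsum_exp_smul hη hsum).comp_of_eq hquad (by simp)
  refine hcomp.congr (.of_forall fun z => tsum_congr fun i => ?_)
  rw [gaussianForm_apply_sq_norm, smul_smul, ← Real.exp_add, sub_add_sub_cancel']
  ring_nf

end Gaussian

section Cover

theorem exists_pos_lt_subset_ball_of_isCompact {X : Type*} [PseudoMetricSpace X] {s : Set X}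
    {x : X} {r : ℝ} (hr : 0 < r) (hs : IsCompact s) (h : s ⊆ ball x r) :
    ∃ r' ∈ Ioo 0 r, s ⊆ ball x r' := by
  rcases s.eq_empty_or_nonempty with rfl | hne
  · exact ⟨r / 2, ⟨half_pos hr, half_lt_self hr⟩, empty_subset _⟩
  obtain ⟨y, hys, hy⟩ : ∃ y ∈ s, s ⊆ closedBall x (dist y x) :=
    hs.exists_isMaxOn (f := fun y => dist y x) hne (by fun_prop)
  obtain ⟨r', hyr', hrr'⟩ := exists_between (mem_ball.mp (h hys))
  exact ⟨r', ⟨dist_nonneg.trans_lt hyr', hrr'⟩, hy.trans (closedBall_subset_ball hyr')⟩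

theorem exists_countable_locallyFinite_iUnion_ball_radius_lt {X : Type u} [MetricSpace X]
    [LocallyCompactSpace X] [SigmaCompactSpace X] {R : X → ℝ} (hR : ∀ x, 0 < R x) :
    ∃ (ι : Type u) (_ : Countable ι) (c : ι → X) (r r' : ι → ℝ),
      (∀ i, 0 < r i ∧ r i < r' i ∧ r' i < R (c i)) ∧
        (LocallyFinite fun i => ball (c i) (r' i)) ∧ ⋃ i, ball (c i) (r i) = univ := by
  choose K hKpos hK using exists_isCompact_closedBall (α := X)
  have hbasis (x : X) : (𝓝 x).HasBasis (fun t : ℝ => 0 < t ∧ t < min (R x) (K x)) (ball x) :=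
    nhds_basis_uniformity (uniformity_basis_dist_lt (lt_min (hR x) (hKpos x)))
  obtain ⟨ι, c, r', hr', hcover, hfin⟩ := refinement_of_locallyCompact_sigmaCompact_of_nhds_basis
    hbasis
  obtain ⟨v, hv, hvclosed, hvball⟩ := exists_iUnion_eq_closed_subset (fun _ => isOpen_ball)
    hfin.point_finite hcover
  have hvcompact (i : ι) : IsCompact (v i) :=
    (hK (c i)).of_isClosed_subset (hvclosed i) <| (hvball i).trans <|
      ball_subset_closedBall.trans <| closedBall_subset_closedBall <|
        ((hr' i).2.trans_le (min_le_right _ _)).le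
  choose r hr hvr using fun i =>
    exists_pos_lt_subset_ball_of_isCompact (hr' i).1 (hvcompact i) (hvball i)
  have hcount : Countable ι := countable_univ_iff.mp <|
    hfin.countable_univ fun i => nonempty_ball.mpr (hr' i).1
  exact ⟨ι, hcount, c, r, r',
    fun i => ⟨(hr i).1, (hr i).2, (hr' i).2.trans_le (min_le_left _ _)⟩, hfin,
    univ_subset_iff.mp (hv.ge.trans (iUnion_mono hvr))⟩

theorem exists_countable_ball_cover_radius_lt {E : Type u} [NormedAddCommGroup E]
    [NormedSpace ℝ E] [ProperSpace E] {U : Set E} (hU : IsOpen U) {R : E → ℝ}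
    (hR : ∀ x ∈ U, 0 < R x) :
    ∃ (ι : Type u) (_ : Countable ι) (s : ι → E) (r r' : ι → ℝ),
      (∀ i, s i ∈ U ∧ 0 < r i ∧ r i < r' i ∧ r' i < R (s i)) ∧
      (∀ z ∈ U, ∃ i, dist z (s i) < r i) ∧
      ∀ z ∈ U, ∃ ρ > 0, ∀ᶠ i in cofinite, r' i + ρ ≤ dist z (s i) := by
  have : LocallyCompactSpace U := hU.locallyCompactSpace
  obtain ⟨ι, hι, s, r, r', hr, hfin, hcover⟩ :=
    exists_countable_locallyFinite_iUnion_ball_radius_lt (X := U) fun x => hR x x.2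
  refine ⟨ι, hι, fun i => s i, r, r', fun i => ⟨(s i).2, hr i⟩, fun z hz => ?_, fun z hz => ?_⟩
  · exact mem_iUnion.mp (hcover.ge (mem_univ (⟨z, hz⟩ : U)))
  · obtain ⟨t, ht, htfin⟩ := hfin ⟨z, hz⟩
    obtain ⟨ρ, hρ, hρt⟩ := Metric.mem_nhds_iff.mp (hU.isOpenMap_subtype_val.image_mem_nhds ht)
    refine ⟨ρ, hρ, htfin.subset fun i hi => ?_⟩
    have hmeet : ¬Disjoint (ball (s i : E) (r' i)) (ball z ρ) := by
      rwa [disjoint_ball_ball_iff ((hr i).1.trans (hr i).2.1) hρ, dist_comm]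
    obtain ⟨y, hyi, hyz⟩ := not_disjoint_iff.mp hmeet
    obtain ⟨y, hyt, rfl⟩ := hρt hyz
    exact ⟨y, hyi, hyt⟩

end Cover

section GaussianSystem

/-- Gaussian bumps whose inner balls cover `U` and whose outer balls are locally finite in `U`. Off
its outer ball a bump is so small that its product with the prescribed number `bound i` is at most
the term `tail i` of a convergent series. -/
structure GaussianSystem {E : Type*} [NormedAddCommGroup E] (U : Set E) (ι : Type*) where
  center : ι → E
  innerRadius : ι → ℝ
  outerRadius : ι → ℝ
  height : ι → ℝ
  rate : ι → ℝ
  bound : ι → ℝ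
  tail : ι → ℝ
  center_mem : ∀ i, center i ∈ U
  innerRadius_pos : ∀ i, 0 < innerRadius i
  innerRadius_lt_outerRadius : ∀ i, innerRadius i < outerRadius i
  exists_dist_lt : ∀ z ∈ U, ∃ i, dist z (center i) < innerRadius i
  exists_add_le_dist : ∀ z ∈ U, ∃ ρ > 0, ∀ᶠ i in cofinite, outerRadius i + ρ ≤ dist z (center i)
  height_pos : ∀ i, 0 < height i
  rate_nonneg : ∀ i, 0 ≤ rate i
  bound_pos : ∀ i, 0 < bound i
  mul_exp_le_tail : ∀ i,
    height i * Real.exp (-rate i * (outerRadius i ^ 2 - innerRadius i ^ 2)) * bound i ≤ tail i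
  summable_tail : Summable tail

namespace GaussianSystem

variable {E F ι : Type*} [NormedAddCommGroup E] [NormedAddCommGroup F] {U : Set E}
  (G : GaussianSystem U ι) {i : ι} {z : E}

/-- The `i`-th bump, scaled so that it equals `height i` on the sphere of radius `innerRadius i`. -/
def bump (i : ι) (z : E) : ℝ :=
  G.height i * Real.exp (G.rate i * (G.innerRadius i ^ 2 - ‖z - G.center i‖ ^ 2))

theorem bump_pos (i : ι) (z : E) : 0 < G.bump i z :=
  mul_pos (G.height_pos i) (Real.exp_pos _)

theorem tail_nonneg (i : ι) : 0 ≤ G.tail i := by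
  have hheight := G.height_pos i
  have hbound := G.bound_pos i
  exact le_trans (by positivity) (G.mul_exp_le_tail i)

theorem height_le_bump (h : dist z (G.center i) < G.innerRadius i) : G.height i ≤ G.bump i z := by
  rw [dist_eq_norm] at h
  refine le_mul_of_one_le_right (G.height_pos i).le (Real.one_le_exp ?_)
  exact mul_nonneg (G.rate_nonneg i) (sub_nonneg.mpr (by gcongr))

theorem bump_mul_bound_le_tail (h : G.outerRadius i ≤ dist z (G.center i)) :
    G.bump i z * G.bound i ≤ G.tail i := by
  have hradius := (G.innerRadius_pos i).trans (G.innerRadius_lt_outerRadius i)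
  have hbound := G.bound_pos i
  have hheight := G.height_pos i
  have hrate := G.rate_nonneg i
  rw [dist_eq_norm] at h
  refine le_trans ?_ (G.mul_exp_le_tail i)
  rw [bump, neg_mul, ← mul_neg, neg_sub]
  gcongr

theorem summable_bump (hbound : ∀ i, 1 ≤ G.bound i) (hz : z ∈ U) :
    Summable fun i => G.bump i z := by
  obtain ⟨ρ, hρ, hfar⟩ := G.exists_add_le_dist z hz
  refine .of_norm_bounded_eventually G.summable_tail (hfar.mono fun i hi => ?_)
  rw [Real.norm_of_nonneg (G.bump_pos i z).le]
  exact (le_mul_of_one_le_right (G.bump_pos i z).le (hbound i)).trans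
    (G.bump_mul_bound_le_tail (by linarith))

theorem tsum_bump_pos (hbound : ∀ i, 1 ≤ G.bound i) (hz : z ∈ U) : 0 < ∑' i, G.bump i z := by
  obtain ⟨i, -⟩ := G.exists_dist_lt z hz
  exact (G.summable_bump hbound hz).tsum_pos (fun i => (G.bump_pos i z).le) i (G.bump_pos i z)

theorem bump_mul_norm_sub_le {x y : F} {ε : ℝ} (hε : 0 ≤ ε) (hbound : 1 + ‖y‖ ≤ G.bound i)
    (hnear : dist z (G.center i) < G.outerRadius i → ‖y - x‖ ≤ ε) :
    G.bump i z * ‖y - x‖ ≤ ε * G.bump i z + (1 + ‖x‖) * G.tail i := by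
  have hbump := G.bump_pos i z
  have htail := G.tail_nonneg i
  rcases lt_or_ge (dist z (G.center i)) (G.outerRadius i) with h | h
  · calc G.bump i z * ‖y - x‖ ≤ ε * G.bump i z := by
          rw [mul_comm]
          gcongr
          exact hnear h
      _ ≤ ε * G.bump i z + (1 + ‖x‖) * G.tail i := le_add_of_nonneg_right (by positivity)
  · calc G.bump i z * ‖y - x‖ ≤ G.bump i z * (G.bound i * (1 + ‖x‖)) := by
          gcongr
          nlinarith [norm_sub_le y x, norm_nonneg x, norm_nonneg y]
      _ = (1 + ‖x‖) * (G.bump i z * G.bound i) := by ring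
      _ ≤ (1 + ‖x‖) * G.tail i := by
          gcongr
          exact G.bump_mul_bound_le_tail h
      _ ≤ ε * G.bump i z + (1 + ‖x‖) * G.tail i := le_add_of_nonneg_left (by positivity)

theorem analyticOnNhd_tsum_bump_smul {E : Type*} [NormedAddCommGroup E] [InnerProductSpace ℝ E]
    [NormedSpace ℝ F] [CompleteSpace F] {U : Set E} (G : GaussianSystem U ι) {c : ι → F}
    (hc : ∀ i, ‖c i‖ ≤ G.bound i) :
    AnalyticOnNhd ℝ (fun z => ∑' i, G.bump i z • c i) U := by
  intro z₀ hz₀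
  obtain ⟨ρ, hρ, hfar⟩ := G.exists_add_le_dist z₀ hz₀
  have houter (i : ι) := (G.innerRadius_pos i).trans (G.innerRadius_lt_outerRadius i)
  let a (i : ι) : ℝ := G.height i * Real.exp (G.rate i * G.innerRadius i ^ 2)
  have ha (i : ι) : 0 < a i := mul_pos (G.height_pos i) (Real.exp_pos _)
  have hsum : Summable fun i =>
      Real.exp (-G.rate i * G.outerRadius i ^ 2) * ‖a i • c i‖ := by
    refine G.summable_tail.of_nonneg_of_le (fun i => by positivity) fun i => ?_
    refine le_trans ?_ (G.mul_exp_le_tail i)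
    have hheight := G.height_pos i
    rw [norm_smul, Real.norm_of_nonneg (ha i).le, ← mul_assoc, mul_left_comm, ← Real.exp_add,
      show -G.rate i * G.outerRadius i ^ 2 + G.rate i * G.innerRadius i ^ 2 =
        -G.rate i * (G.outerRadius i ^ 2 - G.innerRadius i ^ 2) by ring]
    gcongr
    exact hc i
  refine (analyticAt_tsum_gaussian G.rate_nonneg (fun i => (houter i).le) hρ hfar hsum).congr
    (.of_forall fun z => tsum_congr fun i => ?_)
  rw [smul_smul, mul_left_comm, ← Real.exp_add, bump]
  ring_nf

end GaussianSystem

theorem exists_nonneg_mul_exp_neg_mul_le (a : ℝ) {δ v : ℝ} (hδ : 0 < δ) (hv : 0 < v) :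
    ∃ N ≥ 0, a * Real.exp (-N * δ) ≤ v := by
  have hlim : Tendsto (fun N : ℝ => a * Real.exp (-N * δ)) atTop (𝓝 (a * 0)) := by
    refine (Real.tendsto_exp_atBot.comp ?_).const_mul a
    exact tendsto_neg_atTop_atBot.atBot_mul_const hδ
  rw [mul_zero] at hlim
  obtain ⟨N, hN, hNv⟩ := ((eventually_ge_atTop 0).and (hlim.eventually_le_const hv)).exists
  exact ⟨N, hN, hNv⟩

theorem exists_gaussianSystem {E : Type u} [NormedAddCommGroup E] [NormedSpace ℝ E]
    [ProperSpace E] {U : Set E} (hU : IsOpen U) {R C B : E → ℝ} (hR : ∀ x ∈ U, 0 < R x)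
    (hC : ∀ x ∈ U, 0 < C x) (hB : ∀ x ∈ U, 0 < B x) :
    ∃ (ι : Type u) (G : GaussianSystem U ι), (∀ i, G.outerRadius i < R (G.center i)) ∧
      (∀ i, G.height i = C (G.center i)) ∧ (∀ i, G.bound i = B (G.center i)) ∧
      ∑' i, G.tail i ≤ 1 := by
  obtain ⟨ι, hι, s, r, r', hs, hcover, hfar⟩ := exists_countable_ball_cover_radius_lt hU hR
  have := Encodable.ofCountable ι
  obtain ⟨v, hvpos, t, hvt, ht⟩ := posSumOfEncodable (one_pos : (0 : ℝ) < 1) ι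
  have hgap (i : ι) : 0 < r' i ^ 2 - r i ^ 2 := by
    obtain ⟨-, hpos, hlt, -⟩ := hs i
    rw [sub_pos]
    gcongr
  choose N hN hNv using fun i =>
    exists_nonneg_mul_exp_neg_mul_le (C (s i) * B (s i)) (hgap i) (hvpos i)
  exact ⟨ι,
    { center := s
      innerRadius := r
      outerRadius := r'
      height := fun i => C (s i)
      rate := N
      bound := fun i => B (s i)
      tail := v
      center_mem := fun i => (hs i).1
      innerRadius_pos := fun i => (hs i).2.1
      innerRadius_lt_outerRadius := fun i => (hs i).2.2.1
      exists_dist_lt := hcover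
      exists_add_le_dist := hfar
      height_pos := fun i => hC _ (hs i).1
      rate_nonneg := hN
      bound_pos := fun i => hB _ (hs i).1
      mul_exp_le_tail := fun i => (mul_right_comm _ _ _).trans_le (hNv i)
      summable_tail := hvt.summable },
    fun i => (hs i).2.2.2, fun _ => rfl, fun _ => rfl, hvt.tsum_eq.trans_le ht⟩

end GaussianSystem

section Whitney

theorem norm_inv_tsum_smul_tsum_smul_sub_le {F ι : Type*} [NormedAddCommGroup F]
    [NormedSpace ℝ F] [CompleteSpace F] {w v : ι → ℝ} {y : ι → F} {x : F} {ε M : ℝ}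
    (hw : Summable w) (hw₀ : ∀ i, 0 ≤ w i) (hv : Summable v) (hv₁ : ∑' i, v i ≤ 1) (hM : 0 ≤ M)
    (hWpos : 0 < ∑' i, w i) (hW : 2 * M ≤ ε * ∑' i, w i)
    (hle : ∀ i, w i * ‖y i - x‖ ≤ ε / 2 * w i + M * v i) :
    ‖(∑' i, w i)⁻¹ • ∑' i, w i • y i - x‖ ≤ ε := by
  have hmaj : HasSum (fun i => ε / 2 * w i + M * v i) (ε / 2 * ∑' i, w i + M * ∑' i, v i) :=
    (hw.hasSum.mul_left _).add (hv.hasSum.mul_left _)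
  have hterm (i : ι) : ‖w i • (y i - x)‖ ≤ ε / 2 * w i + M * v i := by
    rw [norm_smul, Real.norm_of_nonneg (hw₀ i)]
    exact hle i
  have hdiff : Summable fun i => w i • (y i - x) := hmaj.summable.of_norm_bounded hterm
  have hsplit : ∑' i, w i • y i = ∑' i, w i • (y i - x) + (∑' i, w i) • x := by
    rw [← hw.tsum_smul_const, ← hdiff.tsum_add (hw.smul_const x)]
    simp only [← smul_add, sub_add_cancel]
  rw [hsplit, smul_add, inv_smul_smul₀ hWpos.ne', add_sub_cancel_right, norm_smul, norm_inv,
    Real.norm_of_nonneg hWpos.le, inv_mul_le_iff₀ hWpos]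
  calc ‖∑' i, w i • (y i - x)‖ ≤ ε / 2 * ∑' i, w i + M * ∑' i, v i :=
        tsum_of_norm_bounded hmaj hterm
    _ ≤ ε / 2 * ∑' i, w i + M := by gcongr; exact mul_le_of_le_one_right hM hv₁
    _ ≤ (∑' i, w i) * ε := by linarith

theorem exists_pos_forall_dist_lt_of_continuousOn {X F : Type*} [PseudoMetricSpace X]
    [SeminormedAddCommGroup F] {U : Set X} {f : X → F} {ε φ : X → ℝ} (hf : ContinuousOn f U)
    (hε : ContinuousOn ε U) (hφ : ContinuousOn φ U) {x : X} (hx : x ∈ U) (hεx : 0 < ε x) :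
    ∃ R > 0, ∀ z ∈ U, dist z x < R → ‖f x - f z‖ ≤ ε z / 2 ∧ φ z ≤ φ x + 1 := by
  have hdist : Tendsto (fun z => ‖f x - f z‖) (𝓝[U] x) (𝓝 0) := by
    simpa using ((hf x hx).tendsto.const_sub (f x)).norm
  have hclose : ∀ᶠ z in 𝓝[U] x, ‖f x - f z‖ < ε z / 2 :=
    hdist.eventually_lt ((hε x hx).tendsto.div_const 2) (half_pos hεx)
  have hbounded : ∀ᶠ z in 𝓝[U] x, φ z < φ x + 1 :=
    (hφ x hx).tendsto.eventually_lt_const (lt_add_one _)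
  obtain ⟨R, hR, hRU⟩ := Metric.mem_nhdsWithin_iff.mp (hclose.and hbounded)
  exact ⟨R, hR, fun z hz hzx => (hRU ⟨hzx, hz⟩).imp le_of_lt le_of_lt⟩

-- Whitney's analytic approximation theorem: the heights are chosen so that the bump whose inner
-- ball contains `z` outweighs all the bumps centred far from `z` together.
theorem exists_analyticOnNhd_norm_sub_le {E : Type u} {F : Type*} [NormedAddCommGroup E]
    [InnerProductSpace ℝ E] [ProperSpace E] [NormedAddCommGroup F] [NormedSpace ℝ F]
    [CompleteSpace F] {U : Set E} (hU : IsOpen U) {f : E → F} {ε : E → ℝ}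
    (hf : ContinuousOn f U) (hε : ContinuousOn ε U) (hεpos : ∀ z ∈ U, 0 < ε z) :
    ∃ g : E → F, AnalyticOnNhd ℝ g U ∧ ∀ z ∈ U, ‖g z - f z‖ ≤ ε z := by
  let φ (z : E) : ℝ := 2 * (1 + ‖f z‖) / ε z
  have hφ : ContinuousOn φ U :=
    ((hf.norm.const_add 1).const_mul 2).div hε fun z hz => (hεpos z hz).ne'
  choose! R hRpos hR using fun x (hx : x ∈ U) =>
    exists_pos_forall_dist_lt_of_continuousOn hf hε hφ hx (hεpos x hx)
  obtain ⟨ι, G, houter, hheight, hbound, htail⟩ := exists_gaussianSystem hU (C := fun x => φ x + 1)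
    (B := fun x => 1 + ‖f x‖) hRpos (fun x hx => by have := hεpos x hx; positivity)
    (fun x _ => by positivity)
  have hone (i : ι) : 1 ≤ G.bound i := by simp [hbound i]
  have hsum := G.analyticOnNhd_tsum_bump_smul (c := fun i => f (G.center i)) fun i => by
    simp [hbound i]
  have htotal : AnalyticOnNhd ℝ (fun z => ∑' i, G.bump i z) U := by
    simpa using G.analyticOnNhd_tsum_bump_smul (c := fun _ => (1 : ℝ)) (by simpa using hone)
  have hlarge (z : E) (hz : z ∈ U) : 2 * (1 + ‖f z‖) ≤ ε z * ∑' i, G.bump i z := by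
    obtain ⟨m, hm⟩ := G.exists_dist_lt z hz
    have hmR := hm.trans ((G.innerRadius_lt_outerRadius m).trans (houter m))
    rw [← div_le_iff₀' (hεpos z hz)]
    calc φ z ≤ φ (G.center m) + 1 := (hR _ (G.center_mem m) z hz hmR).2
      _ = G.height m := (hheight m).symm
      _ ≤ G.bump m z := G.height_le_bump hm
      _ ≤ ∑' i, G.bump i z :=
        (G.summable_bump hone hz).le_tsum m fun i _ => (G.bump_pos i z).le
  refine ⟨fun z => (∑' i, G.bump i z)⁻¹ • ∑' i, G.bump i z • f (G.center i), ?_, fun z hz => ?_⟩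
  · exact (htotal.inv fun z hz => (G.tsum_bump_pos hone hz).ne').smul hsum
  · refine norm_inv_tsum_smul_tsum_smul_sub_le (G.summable_bump hone hz)
      (fun i => (G.bump_pos i z).le) G.summable_tail htail (by positivity)
      (G.tsum_bump_pos hone hz) (hlarge z hz) fun i => ?_
    exact G.bump_mul_norm_sub_le (half_pos (hεpos z hz)).le (hbound i).ge fun h =>
      (hR _ (G.center_mem i) z hz (h.trans (houter i))).1

end Whitney

section IteratedProjection

theorem exists_continuous_forall_dist_lt {X K Y : Type*} [TopologicalSpace X] [NormalSpace X]
    [ParacompactSpace X] [PseudoMetricSpace K] [CompactSpace K] [PseudoMetricSpace Y]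
    {f : X → K → Y} (hf : Continuous (Function.uncurry f)) {ε : ℝ} (hε : 0 < ε) :
    ∃ δ : C(X, ℝ), ∀ x, 0 < δ x ∧ ∀ s t, dist s t ≤ δ x → dist (f x s) (f x t) < ε := by
  let g (x : X) : C(K, Y) := ⟨f x, by fun_prop⟩
  have hg : Continuous g := ContinuousMap.continuous_of_continuous_uncurry _ hf
  refine exists_continuous_forall_mem_convex_of_local_const
    (t := fun x => {d | 0 < d ∧ ∀ s t, dist s t ≤ d → dist (f x s) (f x t) < ε})
    (fun x => OrdConnected.convex ⟨?_⟩) fun x => ?_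
  · rintro d₁ ⟨hd₁, -⟩ d₂ ⟨-, hd₂⟩ d ⟨hle₁, hle₂⟩
    exact ⟨hd₁.trans_le hle₁, fun s t hst => hd₂ s t (hst.trans hle₂)⟩
  · have huniform := CompactSpace.uniformContinuous_of_continuous (g x).continuous
    obtain ⟨d, hd, hdist⟩ := Metric.uniformContinuous_iff.mp huniform (ε / 3) (by positivity)
    refine ⟨d / 2, ?_⟩
    filter_upwards [hg.continuousAt (ball_mem_nhds (g x) (by positivity : 0 < ε / 3))] with y hy
    have hyx (s : K) : dist (f y s) (f x s) < ε / 3 :=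
      (ContinuousMap.dist_apply_le_dist (f := g y) (g := g x) s).trans_lt hy
    refine ⟨half_pos hd, fun s t hst => ?_⟩
    calc dist (f y s) (f y t)
        ≤ dist (f y s) (f x s) + dist (f x s) (f x t) + dist (f x t) (f y t) :=
          dist_triangle4 _ _ _ _
      _ < ε / 3 + ε / 3 + ε / 3 := by
          gcongr
          · exact hyx s
          · exact hdist (by linarith)
          · rw [dist_comm]
            exact hyx t
      _ = ε := by ring

variable {𝕜 E X : Type*} [NontriviallyNormedField 𝕜] [NormedAddCommGroup E] [NormedSpace 𝕜 E]

theorem apply_ne_zero_of_norm_sub_lt_one {S T : E →L[𝕜] E} (h : ‖S - T‖ < 1)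
    {v : E} (hv : v ≠ 0) (hS : S v = v) : T v ≠ 0 := by
  intro hT
  have hle := (S - T).le_opNorm v
  rw [_root_.sub_apply, hS, hT, sub_zero] at hle
  exact hle.not_gt (mul_lt_of_lt_one_left (norm_pos_iff.mpr hv) h)

/-- The vector `Q n (⋯ (Q 1 (Q 0 v)))`: along a sequence of projections with small steps it carries
a nonzero vector in the range of `Q 0` to one in the range of `Q n`. -/
def iterProj (Q : ℕ → E →L[𝕜] E) (v : E) : ℕ → E
  | 0 => Q 0 v
  | n + 1 => Q (n + 1) (iterProj Q v n)

section

variable {Q : ℕ → E →L[𝕜] E} {v : E}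

theorem apply_iterProj_self (hQ : ∀ n, IsIdempotentElem (Q n)) (n : ℕ) :
    Q n (iterProj Q v n) = iterProj Q v n := by
  cases n with
  | zero => exact DFunLike.congr_fun (hQ 0).eq v
  | succ n => exact DFunLike.congr_fun (hQ (n + 1)).eq (iterProj Q v n)

theorem iterProj_ne_zero (hQ : ∀ n, IsIdempotentElem (Q n)) (hstep : ∀ n, ‖Q n - Q (n + 1)‖ < 1)
    (hv : Q 0 v ≠ 0) (n : ℕ) : iterProj Q v n ≠ 0 := by
  induction n with
  | zero => exact hv
  | succ n ih => exact apply_ne_zero_of_norm_sub_lt_one (hstep n) ih (apply_iterProj_self hQ n)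

theorem iterProj_eq_of_le (hQ : ∀ n, IsIdempotentElem (Q n)) {m n : ℕ}
    (hconst : ∀ j, m ≤ j → Q j = Q m) (hmn : m ≤ n) : iterProj Q v n = iterProj Q v m := by
  induction n, hmn using Nat.le_induction with
  | base => rfl
  | succ n hn ih => rw [iterProj, ih, hconst _ (hn.trans n.le_succ), apply_iterProj_self hQ]

end

theorem continuous_iterProj [TopologicalSpace X] {Q : X → ℕ → E →L[𝕜] E}
    (hQ : ∀ n, Continuous fun x => Q x n) (v : E) (n : ℕ) :
    Continuous fun x => iterProj (Q x) v n := by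
  induction n with
  | zero => exact (hQ 0).clm_apply continuous_const
  | succ n ih => exact (hQ (n + 1)).clm_apply ih

theorem continuous_iterProj_ceil [TopologicalSpace X] {Q : X → ℕ → E →L[𝕜] E}
    (hQc : ∀ n, Continuous fun x => Q x n) (hQ : ∀ x n, IsIdempotentElem (Q x n)) {L : X → ℝ}
    (hL : Continuous L) (hconst : ∀ x (n : ℕ), L x ≤ n → Q x n = Q x ⌈L x⌉₊) (v : E) :
    Continuous fun x => iterProj (Q x) v ⌈L x⌉₊ := by
  refine continuous_iff_continuousAt.mpr fun x => ?_
  obtain ⟨m, hm⟩ := exists_nat_gt (L x)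
  refine (continuous_iterProj hQc v m).continuousAt.congr ?_
  filter_upwards [hL.continuousAt.eventually_lt_const hm] with y hy
  exact iterProj_eq_of_le (hQ y) (fun j hj => hconst y j (Nat.ceil_le.mp hj))
    (Nat.ceil_le.mpr hy.le)

theorem exists_continuous_section_of_homotopy [TopologicalSpace X] [NormalSpace X]
    [ParacompactSpace X] {f : X → unitInterval → E →L[𝕜] E} (hf : Continuous (Function.uncurry f))
    (hidem : ∀ x t, IsIdempotentElem (f x t)) {v : E} (hv : ∀ x, f x 0 v ≠ 0) :
    ∃ k : X → E, Continuous k ∧ ∀ x, k x ≠ 0 ∧ f x 1 (k x) = k x := by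
  obtain ⟨δ, hδ⟩ := exists_continuous_forall_dist_lt hf one_pos
  let τ (x : X) (n : ℕ) : unitInterval := projIcc 0 1 zero_le_one (n * δ x)
  let Q (x : X) (n : ℕ) : E →L[𝕜] E := f x (τ x n)
  have hQidem (x : X) (n : ℕ) : IsIdempotentElem (Q x n) := hidem x (τ x n)
  have hQ0 (x : X) : Q x 0 = f x 0 := by simp [Q, τ]
  have hQlast (x : X) (n : ℕ) (hn : (δ x)⁻¹ ≤ n) : Q x n = f x 1 :=
    congrArg (f x) (projIcc_of_right_le _ ((inv_le_iff_one_le_mul₀ (hδ x).1).mp hn))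
  have hstep (x : X) (n : ℕ) : ‖Q x n - Q x (n + 1)‖ < 1 := by
    rw [← dist_eq_norm]
    refine (hδ x).2 _ _ ((abs_projIcc_sub_projIcc _).trans_eq ?_)
    rw [← sub_mul, Nat.cast_succ, sub_add_cancel_left, neg_one_mul, abs_neg, abs_of_pos (hδ x).1]
  have hQc (n : ℕ) : Continuous fun x => Q x n :=
    hf.comp (continuous_id.prodMk
      ((continuous_projIcc (h := zero_le_one' ℝ)).comp (by fun_prop)))
  refine ⟨fun x => iterProj (Q x) v ⌈(δ x)⁻¹⌉₊, ?_, fun x => ⟨?_, ?_⟩⟩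
  · exact continuous_iterProj_ceil hQc hQidem (δ.continuous.inv₀ fun x => (hδ x).1.ne')
      (fun x n hn => (hQlast x n hn).trans (hQlast x _ (Nat.le_ceil _)).symm) v
  · exact iterProj_ne_zero (hQidem x) (hstep x) (by rw [hQ0]; exact hv x) _
  · rw [← hQlast x _ (Nat.le_ceil _), apply_iterProj_self (hQidem x)]

theorem exists_continuous_section_of_contractibleSpace [TopologicalSpace X] [NormalSpace X]
    [ParacompactSpace X] [ContractibleSpace X] {P : X → E →L[𝕜] E} (hP : Continuous P)
    (hidem : ∀ x, IsIdempotentElem (P x)) (hne : ∀ x, P x ≠ 0) :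
    ∃ k : X → E, Continuous k ∧ ∀ x, k x ≠ 0 ∧ P x (k x) = k x := by
  obtain ⟨x₀, ⟨H⟩⟩ := id_nullhomotopic X
  obtain ⟨v, hv⟩ := ContinuousLinearMap.exists_ne_zero (hne x₀)
  have hf : Continuous (Function.uncurry fun x t => P (H.symm (t, x))) :=
    hP.comp (H.symm.continuous.comp continuous_swap)
  simpa using exists_continuous_section_of_homotopy hf (fun x t => hidem _) (v := v)
    (fun x => by simpa using hv)

end IteratedProjection

section AnalyticSection

variable {E : Type*} [NormedAddCommGroup E] [InnerProductSpace ℝ E] [ProperSpace E] {U : Set E}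

theorem exists_analyticOnNhd_apply_eq_self {F : Type*} [NormedAddCommGroup F] [NormedSpace ℝ F]
    [CompleteSpace F] (hU : IsOpen U) {P : E → F →L[ℝ] F} (hP : AnalyticOnNhd ℝ P U)
    (hidem : ∀ z ∈ U, IsIdempotentElem (P z)) {k : E → F} (hk : ContinuousOn k U)
    (hkne : ∀ z ∈ U, k z ≠ 0) (hPk : ∀ z ∈ U, P z (k z) = k z) :
    ∃ w : E → F, AnalyticOnNhd ℝ w U ∧ ∀ z ∈ U, w z ≠ 0 ∧ P z (w z) = w z := by
  have hden (z : E) : 0 < 2 * (‖P z‖ + 1) := by positivity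
  obtain ⟨g, hg, hgk⟩ := exists_analyticOnNhd_norm_sub_le hU hk
    (ε := fun z => ‖k z‖ / (2 * (‖P z‖ + 1)))
    (hk.norm.div (by have := hP.continuousOn; fun_prop) fun z _ => (hden z).ne')
    (fun z hz => div_pos (norm_pos_iff.mpr (hkne z hz)) (hden z))
  have happly := (ContinuousLinearMap.id ℝ (F →L[ℝ] F)).analyticOnNhd_bilinear univ
  refine ⟨fun z => P z (g z), happly.comp (hP.prod hg) (mapsTo_univ _ _), fun z hz => ⟨?_, ?_⟩⟩
  · have hclose : ‖P z (g z) - k z‖ < ‖k z‖ := by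
      calc ‖P z (g z) - k z‖ = ‖P z (g z - k z)‖ := by rw [map_sub, hPk z hz]
        _ ≤ (‖P z‖ + 1) * (‖k z‖ / (2 * (‖P z‖ + 1))) :=
          (P z).le_of_opNorm_le_of_le (by linarith) (hgk z hz)
        _ = ‖k z‖ / 2 := by field_simp
        _ < ‖k z‖ := half_lt_self (norm_pos_iff.mpr (hkne z hz))
    intro h
    simp [h] at hclose
  · exact DFunLike.congr_fun (hidem z hz).eq (g z)

theorem exists_analyticOnNhd_section_of_contractibleSpace {F : Type*} [NormedAddCommGroup F]
    [NormedSpace ℝ F] [CompleteSpace F] (hU : IsOpen U) [ContractibleSpace U] {P : E → F →L[ℝ] F}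
    (hP : AnalyticOnNhd ℝ P U) (hidem : ∀ z ∈ U, IsIdempotentElem (P z))
    (hne : ∀ z ∈ U, P z ≠ 0) :
    ∃ w : E → F, AnalyticOnNhd ℝ w U ∧ ∀ z ∈ U, w z ≠ 0 ∧ P z (w z) = w z := by
  obtain ⟨k, hk, hPk⟩ := exists_continuous_section_of_contractibleSpace
    (P := fun x : U => P x) hP.continuousOn.domRestrict (fun x => hidem x x.2) fun x => hne x x.2
  have hext (x : U) : Function.extend Subtype.val k 0 x = k x :=
    Subtype.val_injective.extend_apply ..
  refine exists_analyticOnNhd_apply_eq_self (k := Function.extend Subtype.val k 0) hU hP hidem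
    ?_ (fun z hz => ?_) fun z hz => ?_
  · rw [continuousOn_iff_continuous_domRestrict]
    exact hk.congr fun x => (hext x).symm
  · rw [hext ⟨z, hz⟩]
    exact (hPk ⟨z, hz⟩).1
  · rw [hext ⟨z, hz⟩]
    exact (hPk ⟨z, hz⟩).2

end AnalyticSection

section Kernel

variable {E : Type*} [NormedAddCommGroup E]

@[fun_prop]
theorem analyticAt_re [NormedSpace ℝ E] {f : E → ℂ} {z : E} (hf : AnalyticAt ℝ f z) :
    AnalyticAt ℝ (fun z => (f z).re) z :=
  (reCLM.analyticAt _).comp hf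

@[fun_prop]
theorem analyticAt_im [NormedSpace ℝ E] {f : E → ℂ} {z : E} (hf : AnalyticAt ℝ f z) :
    AnalyticAt ℝ (fun z => (f z).im) z :=
  (imCLM.analyticAt _).comp hf

@[fun_prop]
theorem analyticAt_star [NormedSpace ℝ E] {f : E → ℂ} {z : E} (hf : AnalyticAt ℝ f z) :
    AnalyticAt ℝ (fun z => star (f z)) z :=
  (conjCLE.toContinuousLinearMap.analyticAt _).comp hf

theorem mul_self_eq_trace_smul_of_det_eq_zero {R : Type*} [CommRing R]
    {X : Matrix (Fin 2) (Fin 2) R} (hX : X.det = 0) : X * X = X.trace • X := by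
  rw [det_fin_two] at hX
  ext i j
  fin_cases i <;> fin_cases j <;>
    simp only [mul_apply, Matrix.smul_apply, trace_fin_two, Fin.sum_univ_two, smul_eq_mul] <;>
    grind

open scoped ComplexOrder in
theorem trace_mul_conjTranspose_self_ne_zero {m n : Type*} [Fintype m] [Fintype n]
    {N : Matrix m n ℂ} (hN : N ≠ 0) : (N * Nᴴ).trace ≠ 0 :=
  trace_mul_conjTranspose_self_eq_zero_iff.not.mpr hN

/-- The orthogonal projection of `ℂ²` onto the column space of a matrix `N` of rank one. -/
def rankOneProj (N : Matrix (Fin 2) (Fin 2) ℂ) : Matrix (Fin 2) (Fin 2) ℂ :=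
  (N * Nᴴ).trace⁻¹ • (N * Nᴴ)

section

variable {N : Matrix (Fin 2) (Fin 2) ℂ}

theorem trace_rankOneProj (hN : N ≠ 0) : (rankOneProj N).trace = 1 := by
  rw [rankOneProj, trace_smul, smul_eq_mul,
    inv_mul_cancel₀ (trace_mul_conjTranspose_self_ne_zero hN)]

theorem rankOneProj_ne_zero (hN : N ≠ 0) : rankOneProj N ≠ 0 :=
  fun h => by simpa [h] using trace_rankOneProj hN

theorem isIdempotentElem_rankOneProj (hdet : N.det = 0) (hN : N ≠ 0) :
    IsIdempotentElem (rankOneProj N) := by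
  have hself := mul_self_eq_trace_smul_of_det_eq_zero (X := rankOneProj N)
    (by simp [rankOneProj, hdet])
  rwa [trace_rankOneProj hN, one_smul] at hself

theorem mul_rankOneProj_eq_zero {M : Matrix (Fin 2) (Fin 2) ℂ} (h : M * N = 0) :
    M * rankOneProj N = 0 := by
  rw [rankOneProj, Matrix.mul_smul, ← Matrix.mul_assoc, h, Matrix.zero_mul, smul_zero]

end

theorem analyticOnNhd_rankOneProj_mulVec [NormedSpace ℝ E] {U : Set E}
    {N : E → Matrix (Fin 2) (Fin 2) ℂ} (hN : ∀ i j, AnalyticOnNhd ℝ (fun z => N z i j) U)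
    (hne : ∀ z ∈ U, N z ≠ 0) (v : Fin 2 → ℂ) :
    AnalyticOnNhd ℝ (fun z => rankOneProj (N z) *ᵥ v) U := by
  intro z hz
  have hNz (i j : Fin 2) : AnalyticAt ℝ (fun z => N z i j) z := hN i j z hz
  have hgram (i j : Fin 2) : AnalyticAt ℝ (fun z => (N z * (N z)ᴴ) i j) z := by
    simp only [mul_apply, conjTranspose_apply, Fin.sum_univ_two]
    fun_prop
  have htrace : AnalyticAt ℝ (fun z => (N z * (N z)ᴴ).trace) z := by
    simp only [trace_fin_two]
    fun_prop
  have hproj (i j : Fin 2) : AnalyticAt ℝ (fun z => rankOneProj (N z) i j) z :=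
    (htrace.inv (trace_mul_conjTranspose_self_ne_zero (hne z hz))).mul (hgram i j)
  refine analyticAt_pi_iff.mpr fun i => ?_
  simp only [mulVec, dotProduct, Fin.sum_univ_two]
  fun_prop

variable [InnerProductSpace ℝ E] [ProperSpace E] {U : Set E}

theorem exists_analyticOnNhd_mulVec_eq_self {ι : Type*} [Fintype ι] (hU : IsOpen U)
    [ContractibleSpace U] {P : E → Matrix ι ι ℂ}
    (hP : ∀ v, AnalyticOnNhd ℝ (fun z => P z *ᵥ v) U)
    (hidem : ∀ z ∈ U, IsIdempotentElem (P z)) (hne : ∀ z ∈ U, P z ≠ 0) :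
    ∃ w : E → ι → ℂ, AnalyticOnNhd ℝ w U ∧ ∀ z ∈ U, w z ≠ 0 ∧ P z *ᵥ w z = w z := by
  let T (z : E) : (ι → ℂ) →L[ℝ] (ι → ℂ) :=
    LinearMap.toContinuousLinearMap ((P z).mulVecLin.restrictScalars ℝ)
  have hT (z : E) (v : ι → ℂ) : T z v = P z *ᵥ v := rfl
  have hTan : AnalyticOnNhd ℝ T U := by
    rw [← hU.analyticOn_iff_analyticOnNhd, ← contDiffOn_omega_iff_analyticOn hU.uniqueDiffOn,
      contDiffOn_clm_apply]
    exact fun v => (hP v).contDiffOn hU.uniqueDiffOn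
  refine exists_analyticOnNhd_section_of_contractibleSpace hU hTan (fun z hz => ?_) fun z hz h => ?_
  · ext1 v
    rw [mul_apply_eq_comp, hT, hT, mulVec_mulVec, (hidem z hz).eq]
  · refine hne z hz (mulVec_injective (funext fun v => ?_))
    rw [← hT, h, _root_.zero_apply, zero_mulVec]

theorem exists_analyticOnNhd_mulVec_eq_zero (hU : IsOpen U) [ContractibleSpace U]
    {M : E → Matrix (Fin 2) (Fin 2) ℂ} (hM : ∀ i j, AnalyticOnNhd ℝ (fun z => M z i j) U)
    (hdet : ∀ z ∈ U, (M z).det = 0) (hne : ∀ z ∈ U, M z ≠ 0) :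
    ∃ w : E → Fin 2 → ℂ, AnalyticOnNhd ℝ w U ∧ ∀ z ∈ U, w z ≠ 0 ∧ M z *ᵥ w z = 0 := by
  have hadj (z : E) (hz : z ∈ U) : (M z).adjugate ≠ 0 := fun h => hne z hz <| by
    simpa [h] using (adjugate_adjugate' (M z)).symm
  have hadjan (i j : Fin 2) : AnalyticOnNhd ℝ (fun z => (M z).adjugate i j) U := by
    simp only [adjugate_fin_two]
    fin_cases i <;> fin_cases j
    exacts [hM 1 1, (hM 0 1).neg, (hM 1 0).neg, hM 0 0]
  obtain ⟨w, hw, hPw⟩ := exists_analyticOnNhd_mulVec_eq_self hU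
    (analyticOnNhd_rankOneProj_mulVec hadjan hadj)
    (fun z hz => isIdempotentElem_rankOneProj (by simp [det_adjugate, hdet z hz]) (hadj z hz))
    fun z hz => rankOneProj_ne_zero (hadj z hz)
  refine ⟨w, hw, fun z hz => ⟨(hPw z hz).1, ?_⟩⟩
  rw [← (hPw z hz).2, mulVec_mulVec, mul_rankOneProj_eq_zero (by simp [mul_adjugate, hdet z hz]),
    zero_mulVec]

end Kernel

section Spin

/-- The matrix `v₀ + v₁σ₃ + v₂σ₁ + v₃σ₂` of Pauli matrices representing `v ∈ ℂ⁴`; its determinant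
is minus the Lorentzian form of `v`. -/
def pauli (v : Fin 4 → ℂ) : Matrix (Fin 2) (Fin 2) ℂ :=
  !![v 0 + v 1, v 2 - I * v 3; v 2 + I * v 3, v 0 - v 1]

theorem det_pauli (v : Fin 4 → ℂ) : (pauli v).det = -(v ⬝ᵥ I13C *ᵥ v) := by
  simp only [pauli, I13C, det_fin_two_of, dotProduct, mulVec_diagonal, Fin.sum_univ_four,
    cons_val]
  linear_combination (v 3) ^ 2 * I_sq

theorem eq_zero_of_pauli_eq_zero {v : Fin 4 → ℂ} (h : pauli v = 0) : v = 0 := by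
  have h00 : v 0 + v 1 = 0 := congrFun₂ h 0 0
  have h01 : v 2 - I * v 3 = 0 := congrFun₂ h 0 1
  have h10 : v 2 + I * v 3 = 0 := congrFun₂ h 1 0
  have h11 : v 0 - v 1 = 0 := congrFun₂ h 1 1
  ext i
  fin_cases i
  · change v 0 = 0
    linear_combination (h00 + h11) / 2
  · change v 1 = 0
    linear_combination (h00 - h11) / 2
  · change v 2 = 0
    linear_combination (h01 + h10) / 2
  · change v 3 = 0
    linear_combination (I / 2) * (h01 - h10) + v 3 * I_sq

theorem pauli_smul (c : ℂ) (v : Fin 4 → ℂ) : pauli (c • v) = c • pauli v := by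
  ext i j
  fin_cases i <;> fin_cases j <;> simp [pauli] <;> ring

theorem analyticOnNhd_pauli {E : Type*} [NormedAddCommGroup E] [NormedSpace ℝ E] {U : Set E}
    {v : E → Fin 4 → ℂ} (hv : ∀ i, AnalyticOnNhd ℝ (fun z => v z i) U) (i j : Fin 2) :
    AnalyticOnNhd ℝ (fun z => pauli (v z) i j) U := by
  intro z hz
  have hvz (k : Fin 4) : AnalyticAt ℝ (fun z => v z k) z := hv k z hz
  fin_cases i <;> fin_cases j <;>
    simp only [pauli, of_apply, Fin.zero_eta, Fin.mk_one, cons_val] <;>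
    fun_prop

theorem eq_of_pauli_mulVec_eq_zero {v : Fin 4 → ℂ} (h : pauli v *ᵥ ![1, 0] = 0) :
    v = ![v 0, -v 0, v 2, I * v 2] := by
  have h0 : v 0 + v 1 = 0 := by simpa [pauli] using congrFun h 0
  have h1 : v 2 + I * v 3 = 0 := by simpa [pauli] using congrFun h 1
  ext i
  fin_cases i
  · rfl
  · exact (neg_eq_of_add_eq_zero_right h0).symm
  · rfl
  · change v 3 = I * v 2
    linear_combination -I * h1 + v 3 * I_sq

/-- The Euler–Rodrigues matrix: `a² + b² + c² + d²` times the spatial rotation of `ℝ⁴` determined by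
the quaternion with components `a, b, c, d`. -/
def eulerRodrigues (a b c d : ℝ) : Matrix (Fin 4) (Fin 4) ℝ :=
  !![a ^ 2 + b ^ 2 + c ^ 2 + d ^ 2, 0, 0, 0;
     0, a ^ 2 + b ^ 2 - c ^ 2 - d ^ 2, 2 * (a * c + b * d), 2 * (a * d - b * c);
     0, -2 * (a * c - b * d), a ^ 2 - b ^ 2 - c ^ 2 + d ^ 2, -2 * (a * b + c * d);
     0, -2 * (a * d + b * c), 2 * (a * b - c * d), a ^ 2 - b ^ 2 + c ^ 2 - d ^ 2]

theorem transpose_mul_I13_mul_eulerRodrigues (a b c d : ℝ) :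
    (eulerRodrigues a b c d)ᵀ * I13 * eulerRodrigues a b c d =
      (a ^ 2 + b ^ 2 + c ^ 2 + d ^ 2) ^ 2 • I13 := by
  ext i j
  fin_cases i <;> fin_cases j <;>
    simp only [I13, eulerRodrigues, mul_apply, Fin.sum_univ_four, transpose_apply, of_apply,
      diagonal_apply, Matrix.smul_apply, smul_eq_mul, Fin.zero_eta, Fin.mk_one, Fin.reduceFinMk,
      cons_val, Fin.reduceEq, if_true, if_false] <;>
    ring

theorem det_eulerRodrigues (a b c d : ℝ) :
    (eulerRodrigues a b c d).det = (a ^ 2 + b ^ 2 + c ^ 2 + d ^ 2) ^ 4 := by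
  rw [det_succ_row_zero]
  simp [eulerRodrigues, Fin.sum_univ_four, det_fin_three, Fin.succAbove]
  ring

theorem SOplus13_inv_smul_eulerRodrigues {a b c d : ℝ}
    (h : 0 < a ^ 2 + b ^ 2 + c ^ 2 + d ^ 2) :
    SOplus13 ((a ^ 2 + b ^ 2 + c ^ 2 + d ^ 2)⁻¹ • eulerRodrigues a b c d) := by
  refine ⟨?_, ?_, ?_⟩
  · rw [transpose_smul, Matrix.smul_mul, Matrix.smul_mul, Matrix.mul_smul,
      transpose_mul_I13_mul_eulerRodrigues, smul_smul, smul_smul, ← sq, ← mul_pow,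
      inv_mul_cancel₀ h.ne', one_pow, one_smul]
  · rw [det_smul, det_eulerRodrigues, Fintype.card_fin, ← mul_pow, inv_mul_cancel₀ h.ne', one_pow]
  · simpa [eulerRodrigues] using mul_pos (inv_pos.mpr h) h

/-- The matrix with first column `w` that is a nonnegative multiple of an element of `SU(2)`. -/
def spinor (w : Fin 2 → ℂ) : Matrix (Fin 2) (Fin 2) ℂ :=
  !![w 0, -star (w 1); w 1, star (w 0)]

/-- The spatial rotation of `ℝ⁴` covered by the element of `SU(2)` proportional to `spinor w`. -/
def spinRotation (w : Fin 2 → ℂ) : Matrix (Fin 4) (Fin 4) ℝ :=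
  ((w 0).re ^ 2 + (w 0).im ^ 2 + (w 1).re ^ 2 + (w 1).im ^ 2)⁻¹ •
    eulerRodrigues (w 0).re (w 0).im (w 1).re (w 1).im

theorem spinor_mulVec (w : Fin 2 → ℂ) : spinor w *ᵥ ![1, 0] = w := by
  ext i
  fin_cases i <;> simp [spinor]

theorem pauli_eulerRodrigues_mulVec (w : Fin 2 → ℂ) (v : Fin 4 → ℂ) :
    pauli ((eulerRodrigues (w 0).re (w 0).im (w 1).re (w 1).im).map ofReal *ᵥ v) =
      (spinor w)ᴴ * pauli v * spinor w := by
  have hw (i : Fin 2) : w i = (w i).re + (w i).im * I := (re_add_im (w i)).symm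
  have hstar (i : Fin 2) : starRingEnd ℂ (w i) = (w i).re - (w i).im * I := by
    simp [Complex.ext_iff]
  ext i j
  fin_cases i <;> fin_cases j <;>
    simp [pauli, spinor, eulerRodrigues, mulVec, dotProduct, Fin.sum_univ_four, mul_apply] <;>
    grind [I_sq]

theorem pauli_spinRotation_mulVec_mulVec_eq_zero {w : Fin 2 → ℂ} {v : Fin 4 → ℂ}
    (h : pauli v *ᵥ w = 0) : pauli ((spinRotation w).map ofReal *ᵥ v) *ᵥ ![1, 0] = 0 := by
  rw [spinRotation, Matrix.map_smul' _ _ _ ofReal_mul, smul_mulVec, pauli_smul,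
    pauli_eulerRodrigues_mulVec, smul_mulVec, ← mulVec_mulVec, spinor_mulVec, ← mulVec_mulVec, h,
    mulVec_zero, smul_zero]

theorem sum_sq_re_im_pos {w : Fin 2 → ℂ} (hw : w ≠ 0) :
    0 < (w 0).re ^ 2 + (w 0).im ^ 2 + (w 1).re ^ 2 + (w 1).im ^ 2 := by
  obtain ⟨i, hi⟩ := Function.ne_iff.mp hw
  have hpos : 0 < ∑ i, normSq (w i) :=
    Finset.sum_pos' (fun i _ => normSq_nonneg _) ⟨i, Finset.mem_univ i, normSq_pos.mpr hi⟩
  simpa only [Fin.sum_univ_two, normSq_apply, ← sq, ← add_assoc] using hpos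

theorem SOplus13_spinRotation {w : Fin 2 → ℂ} (hw : w ≠ 0) : SOplus13 (spinRotation w) :=
  SOplus13_inv_smul_eulerRodrigues (sum_sq_re_im_pos hw)

theorem analyticOnNhd_spinRotation {E : Type*} [NormedAddCommGroup E] [NormedSpace ℝ E] {U : Set E}
    {w : E → Fin 2 → ℂ} (hw : AnalyticOnNhd ℝ w U) (hne : ∀ z ∈ U, w z ≠ 0) (i j : Fin 4) :
    AnalyticOnNhd ℝ (fun z => spinRotation (w z) i j) U := by
  intro z hz
  have hwz (k : Fin 2) : AnalyticAt ℝ (fun z => w z k) z := analyticAt_pi_iff.mp (hw z hz) k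
  have hinv := (sum_sq_re_im_pos (hne z hz)).ne'
  simp only [spinRotation, Matrix.smul_apply, smul_eq_mul]
  refine AnalyticAt.mul (AnalyticAt.inv (by fun_prop) hinv) ?_
  fin_cases i <;> fin_cases j <;>
    simp only [eulerRodrigues, of_apply, Fin.zero_eta, Fin.mk_one, Fin.reduceFinMk, cons_val] <;>
    fun_prop

end Spin

theorem stmt0_general {E : Type*} [NormedAddCommGroup E] [InnerProductSpace ℝ E] [ProperSpace E]
    (U : Set E) (hUo : IsOpen U) (hUc : ContractibleSpace U) (b : E → Fin 4 → ℂ)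
    (hb_an : ∀ i, AnalyticOn ℝ (fun z => b z i) U) (hb_ne : ∀ z ∈ U, b z ≠ 0)
    (hb_null : ∀ z ∈ U, dotProduct (b z) (I13C.mulVec (b z)) = 0) :
    ∃ A : E → Matrix (Fin 4) (Fin 4) ℝ,
      (∀ i j, AnalyticOn ℝ (fun z => A z i j) U) ∧
      (∀ z ∈ U, SOplus13 (A z)) ∧
      ∃ p q : E → ℂ, ∀ z ∈ U,
        ((A z).map Complex.ofReal).mulVec (b z) = ![p z, -p z, q z, Complex.I * q z] := by
  obtain ⟨w, hw, hwb⟩ := exists_analyticOnNhd_mulVec_eq_zero hUo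
    (analyticOnNhd_pauli fun i => hUo.analyticOn_iff_analyticOnNhd.mp (hb_an i))
    (fun z hz => by rw [det_pauli, hb_null z hz, neg_zero])
    (fun z hz => fun h => hb_ne z hz (eq_zero_of_pauli_eq_zero h))
  exact ⟨fun z => spinRotation (w z),
    fun i j => (analyticOnNhd_spinRotation hw (fun z hz => (hwb z hz).1) i j).analyticOn,
    fun z hz => SOplus13_spinRotation (hwb z hz).1, _, _, fun z hz =>
      eq_of_pauli_mulVec_eq_zero (pauli_spinRotation_mulVec_mulVec_eq_zero (hwb z hz).2)⟩

/-- Lemma 4.1: a nowhere-vanishing real analytic null vector `b : U → ℂ⁴` on a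
contractible open set `U ⊆ ℂ` can be transformed by a real analytic
`SO⁺(1,3)`-valued map into the span of `(1,-1,0,0)ᵀ` and `(0,0,1,i)ᵀ`. -/
theorem stmt0 (U : Set ℂ) (hUo : IsOpen U) (hUc : ContractibleSpace U)
    (b : ℂ → Fin 4 → ℂ)
    (hb_an : ∀ i, AnalyticOn ℝ (fun z => b z i) U)
    (hb_ne : ∀ z ∈ U, b z ≠ 0)
    (hb_null : ∀ z ∈ U, dotProduct (b z) (I13C.mulVec (b z)) = 0) :
    ∃ A : ℂ → Matrix (Fin 4) (Fin 4) ℝ,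
      (∀ i j, AnalyticOn ℝ (fun z => A z i j) U) ∧
      (∀ z ∈ U, SOplus13 (A z)) ∧
      ∃ p q : ℂ → ℂ, ∀ z ∈ U,
        ((A z).map Complex.ofReal).mulVec (b z) = ![p z, -p z, q z, Complex.I * q z] :=
  stmt0_general U hUo hUc b hb_an hb_ne hb_null
end
end

section
/- Let U be a contractible open subset of ℂ and let B₁ : U → Mat(4×n, ℂ) be a real analytic matrix-valued function, not identically zero, which admits a factorization B₁ = S₁ R₁ S₂ where R₁ : U → Mat(4×n, ℂ) is holomorphic, S₁ : U → GL(4,ℂ) is real analytic with S₁(z)ᵀ I₁,₃ S₁(z) = I₁,₃ and det S₁(z) = 1 for all z, and S₂ : U → GL(n,ℂ) is real analytic with S₂(z)ᵀ S₂(z) = Iₙ and det S₂(z) = 1 for all z. Then B₁(z)ᵀ I₁,₃ B₁(z) = 0 for all z ∈ U if and only if there exists a real analytic map 𝔸 : U → SO⁺(1,3) such that either every column of 𝔸(z)B₁(z) lies in span_ℂ{(1,−1,0,0)ᵀ, (0,0,1,i)ᵀ} for all z ∈ U, or every column of 𝔸(z)B₁(z) lies in span_ℂ{(1,−1,0,0)ᵀ,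 (0,0,1,−i)ᵀ} for all z ∈ U. (Theorem 3.4 of the paper, with the factorization through a holomorphic potential made explicit as a hypothesis.) -/
open Matrix Complex

noncomputable section

open Filter Topology

/-!
Write `2 × 2` matrices for vectors of `ℂ⁴`, so that minus the Lorentz form becomes the polarized
determinant. Pairwise orthogonal null vectors are then rank-one matrices whose rows are all
parallel, or whose columns are all parallel. For the columns of the holomorphic factor `R₁`, one of
the two alternatives holds on all of `U` by the identity theorem, and transposing (that is,
replacing `I` by `-I`) reduces to rows. Dividing one nonzero row by a greatest common divisor of its
entries, a Weierstrass product on `U`, gives a nowhere vanishing `α : U → ℂ²` to which all rows are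
parallel. So the columns of `R₁` lie in a maximal isotropic subspace with a holomorphic basis, also
at the points where `R₁` drops rank.

The complex Lorentz matrix `S₁` carries this basis to a real analytic one. The resulting plane
contains, up to scale, a single vector with zero time coordinate; being null, it has real and
imaginary parts which are orthogonal and of equal nonzero length, and after normalization these are
the last two axes `u`, `v` of the required rest frame, the remaining one being `±(u × v)`. The sign
is constant on `U` by analyticity, and decides between the two planes of the theorem.
-/

open Filter Topology Metric Set

theorem forall_eq_zero_or_forall_eq_zero {𝕜 E A B ι κ : Type*} [NontriviallyNormedField 𝕜]
    [NormedAddCommGroup E] [NormedSpace 𝕜 E] [NormedAddCommGroup A] [NormedSpace 𝕜 A]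
    [NormedAddCommGroup B] [NormedSpace 𝕜 B] {U : Set E} (hU : IsOpen U) (hUc : IsPreconnected U)
    {F : ι → E → A} {G : κ → E → B} (hF : ∀ i, ContinuousOn (F i) U)
    (hG : ∀ k, AnalyticOnNhd 𝕜 (G k) U)
    (h : ∀ z ∈ U, (∀ i, F i z = 0) ∨ ∀ k, G k z = 0) :
    (∀ z ∈ U, ∀ i, F i z = 0) ∨ ∀ z ∈ U, ∀ k, G k z = 0 := by
  refine or_iff_not_imp_left.2 fun hne z hz k => ?_
  push Not at hne
  obtain ⟨w, hw, i, hi⟩ := hne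
  have hzero : ∀ᶠ x in 𝓝 w, G k x = 0 := by
    filter_upwards [((hF i).continuousAt (hU.mem_nhds hw)).eventually_ne hi, hU.mem_nhds hw]
      with x hx hxU
    exact (h x hxU).resolve_left (fun h0 => hx (h0 i)) k
  exact (hG k).eqOn_zero_of_preconnected_of_eventuallyEq_zero hUc hw hzero hz

/-! ### Weierstrass products on plane domains -/

/-- The points of `U` of norm at most `r` and at distance at least `r⁻¹` from the complement of
`U`. As `r` grows, these sets form a compact exhaustion of `U`. -/
def innerCore (U : Set ℂ) (r : ℝ) : Set ℂ := {z | ‖z‖ ≤ r ∧ ball z r⁻¹ ⊆ U}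

theorem innerCore_subset {U : Set ℂ} {r : ℝ} (hr : 0 < r) : innerCore U r ⊆ U :=
  fun _ hz => hz.2 (mem_ball_self (inv_pos.2 hr))

theorem isCompact_innerCore (U : Set ℂ) (r : ℝ) : IsCompact (innerCore U r) := by
  have hcore : innerCore U r = closedBall 0 r ∩ ⋂ w ∈ Uᶜ, {z | r⁻¹ ≤ dist w z} := by
    ext z
    simp only [innerCore, mem_inter_iff, mem_closedBall_zero_iff, mem_iInter, mem_compl_iff,
      Set.mem_ofPred_eq, Set.subset_def, mem_ball]
    exact and_congr_right fun _ => forall_congr' fun w => by rw [← not_imp_not, not_lt]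
  rw [hcore]
  exact (isCompact_closedBall 0 r).inter_right <|
    isClosed_biInter fun w _ => isClosed_le continuous_const (by fun_prop)

theorem innerCore_mono (U : Set ℂ) {r s : ℝ} (hr : 0 < r) (hrs : r ≤ s) :
    innerCore U r ⊆ innerCore U s :=
  fun _ hz => ⟨hz.1.trans hrs, (ball_subset_ball (inv_anti₀ hr hrs)).trans hz.2⟩

theorem exists_subset_innerCore {U K : Set ℂ} (hU : IsOpen U) (hK : IsCompact K) (hKU : K ⊆ U) :
    ∃ r > 0, K ⊆ innerCore U r := by
  obtain ⟨δ, hδ, hthick⟩ := hK.exists_thickening_subset_open hU hKU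
  obtain ⟨M, hM⟩ := hK.isBounded.exists_norm_le
  refine ⟨max M δ⁻¹, lt_max_of_lt_right (inv_pos.2 hδ), fun z hz =>
    ⟨(hM z hz).trans (le_max_left _ _), ?_⟩⟩
  exact (ball_subset_ball (inv_le_of_inv_le₀ hδ (le_max_right _ _))).trans
    ((ball_subset_thickening hz δ).trans hthick)

theorem norm_sub_lt_inv_of_notMem_innerCore {U : Set ℂ} {a : ℂ} {r : ℝ}
    (ha : a ∉ innerCore U r) : r < ‖a‖ ∨ ∃ w ∉ U, ‖w - a‖ < r⁻¹ := by
  rw [innerCore, Set.mem_ofPred_eq, not_and_or, not_le, not_subset] at ha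
  simpa only [mem_ball, dist_eq_norm, and_comm] using ha

theorem inv_le_norm_sub_of_mem_innerCore {U : Set ℂ} {z b : ℂ} {r : ℝ}
    (hz : z ∈ innerCore U r) (hb : b ∉ U) : r⁻¹ ≤ ‖z - b‖ := by
  rw [← dist_eq_norm, dist_comm]
  exact not_lt.1 fun hlt => hb (hz.2 hlt)

theorem norm_div_le_half_of_mem_innerCore {U : Set ℂ} {a b z : ℂ} {r : ℝ} (hr : 0 < r)
    (hb : b ∉ U) (hab : ∀ w ∉ U, ‖a - b‖ ≤ ‖a - w‖) (hb1 : ‖a‖ * ‖a - b‖ ≤ 1)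
    (ha : a ∉ innerCore U (2 * r)) (hz : z ∈ innerCore U r) : ‖(a - b) / (z - b)‖ ≤ 1 / 2 := by
  have hzb : r⁻¹ ≤ ‖z - b‖ := inv_le_norm_sub_of_mem_innerCore hz hb
  have hclose : ‖a - b‖ ≤ (2 * r)⁻¹ := by
    rcases norm_sub_lt_inv_of_notMem_innerCore ha with hlt | ⟨w, hw, hlt⟩
    · rw [inv_eq_one_div, le_div_iff₀' (by positivity)]
      exact (mul_le_mul_of_nonneg_right hlt.le (norm_nonneg _)).trans hb1
    · exact (hab w hw).trans (norm_sub_rev a w ▸ hlt.le)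
  rw [norm_div, div_le_iff₀ ((inv_pos.2 hr).trans_le hzb)]
  calc ‖a - b‖ ≤ (2 * r)⁻¹ := hclose
    _ = 1 / 2 * r⁻¹ := by rw [mul_inv, one_div]
    _ ≤ 1 / 2 * ‖z - b‖ := by gcongr

theorem norm_div_le_half_of_forall_one_lt {U : Set ℂ} {a z : ℂ} {r : ℝ} (hr : 0 < r)
    (hfar : ∀ w ∉ U, 1 < ‖a‖ * ‖a - w‖) (ha : a ∉ innerCore U (2 * r))
    (hz : z ∈ innerCore U r) : ‖z / a‖ ≤ 1 / 2 := by
  have hlarge : 2 * r ≤ ‖a‖ := by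
    rcases norm_sub_lt_inv_of_notMem_innerCore ha with hlt | ⟨w, hw, hlt⟩
    · exact hlt.le
    · by_contra! hlt'
      have hprod : ‖a‖ * ‖a - w‖ ≤ 2 * r * (2 * r)⁻¹ := by
        rw [norm_sub_rev]
        gcongr
      rw [mul_inv_cancel₀ (by positivity)] at hprod
      exact (hfar w hw).not_ge hprod
  rw [norm_div, div_le_iff₀ (by linarith)]
  linarith [hz.1]

-- The factor `1 - (z - a) * g z` is `(a - b) / (z - b)` for a point `b` outside `U` nearest to `a`,
-- which is small when `a` is close to the boundary; if `a` is far from it compared with `‖a‖⁻¹`,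
-- then `a` is large and `z / a` is used instead.
theorem exists_nonvanishing_norm_one_sub_mul_le {U : Set ℂ} (hU : IsOpen U) (a : ℂ) :
    ∃ g : ℂ → ℂ, DifferentiableOn ℂ g U ∧ (∀ z ∈ U, g z ≠ 0) ∧
      ∀ r > 0, a ∉ innerCore U (2 * r) → ∀ z ∈ innerCore U r, ‖1 - (z - a) * g z‖ ≤ 1 / 2 := by
  by_cases hnear : ∃ b ∉ U, ‖a‖ * ‖a - b‖ ≤ 1
  · obtain ⟨b₀, hb₀, hab₀⟩ := hnear
    obtain ⟨b, hb, hbdist⟩ := hU.isClosed_compl.exists_infDist_eq_dist ⟨b₀, hb₀⟩ a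
    have hmin : ∀ w ∉ U, ‖a - b‖ ≤ ‖a - w‖ := fun w hw => by
      rw [← dist_eq_norm, ← hbdist, ← dist_eq_norm]
      exact infDist_le_dist_of_mem hw
    have hb1 : ‖a‖ * ‖a - b‖ ≤ 1 :=
      (mul_le_mul_of_nonneg_left (hmin b₀ hb₀) (norm_nonneg a)).trans hab₀
    have hsub : ∀ z ∈ U, z - b ≠ 0 := fun z hz h => hb (sub_eq_zero.1 h ▸ hz)
    refine ⟨fun z => (z - b)⁻¹, DifferentiableOn.inv (by fun_prop) hsub,
      fun z hz => inv_ne_zero (hsub z hz), fun r hr har z hz => ?_⟩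
    have hzb := hsub z (innerCore_subset hr hz)
    rw [show 1 - (z - a) * (z - b)⁻¹ = (a - b) / (z - b) by field_simp; ring]
    exact norm_div_le_half_of_mem_innerCore hr hb hmin hb1 har hz
  · push Not at hnear
    rcases eq_or_ne a 0 with rfl | ha0
    · have hUniv : ∀ w, w ∈ U := fun w => by
        by_contra hw
        exact not_lt_of_ge zero_le_one (by simpa using hnear w hw)
      exact ⟨fun _ => 1, by fun_prop, fun _ _ => one_ne_zero, fun r hr har =>
        absurd ⟨by simp [hr.le], fun w _ => hUniv w⟩ har⟩
    · refine ⟨fun _ => -a⁻¹, by fun_prop, fun _ _ => by simpa using ha0, fun r hr har z hz => ?_⟩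
      rw [show 1 - (z - a) * -a⁻¹ = z / a by field_simp; ring]
      exact norm_div_le_half_of_forall_one_lt hr hnear har hz
/-- The Weierstrass elementary factor `(1 - u) exp (u + u² / 2 + ⋯ + u ^ N / N)`. -/
def weierstrassFactor (N : ℕ) (u : ℂ) : ℂ := (1 - u) * exp (-logTaylor (N + 1) (-u))

theorem differentiable_weierstrassFactor (N : ℕ) : Differentiable ℂ (weierstrassFactor N) := by
  unfold weierstrassFactor logTaylor
  fun_prop

theorem weierstrassFactor_ne_zero (N : ℕ) {u : ℂ} (hu : u ≠ 1) : weierstrassFactor N u ≠ 0 :=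
  mul_ne_zero (sub_ne_zero.2 hu.symm) (exp_ne_zero _)

theorem exists_weierstrassFactor_eq_exp (N : ℕ) {u : ℂ} (hu : ‖u‖ ≤ 1 / 2) :
    ∃ t, weierstrassFactor N u = exp t ∧ ‖t‖ ≤ (1 / 2) ^ N := by
  have hu1 : 1 + -u ≠ 0 := fun h => by
    rw [← sub_eq_add_neg, sub_eq_zero] at h
    norm_num [← h] at hu
  refine ⟨log (1 + -u) - logTaylor (N + 1) (-u), ?_, ?_⟩
  · rw [weierstrassFactor, sub_eq_add_neg (log _), exp_add, exp_log hu1, sub_eq_add_neg]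
  have hlog := norm_log_sub_logTaylor_le N (z := -u) (by rw [norm_neg]; linarith)
  rw [norm_neg] at hlog
  have hinv : (1 - ‖u‖)⁻¹ ≤ 2 := by rw [inv_le_comm₀] <;> linarith
  have hinv₀ : 0 ≤ (1 - ‖u‖)⁻¹ := inv_nonneg.2 (by linarith)
  calc _ ≤ ‖u‖ ^ (N + 1) * (1 - ‖u‖)⁻¹ / (N + 1) := hlog
    _ ≤ ‖u‖ ^ (N + 1) * (1 - ‖u‖)⁻¹ := div_le_self (by positivity) (by simp)
    _ ≤ (1 / 2) ^ (N + 1) * 2 := by gcongr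
    _ = (1 / 2) ^ N := by rw [pow_succ]; ring

theorem norm_weierstrassFactor_pow_sub_one_le (m e : ℕ) {u : ℂ} (hu : ‖u‖ ≤ 1 / 2) :
    ‖weierstrassFactor (m + e) u ^ m - 1‖ ≤ 2 * (1 / 2) ^ e := by
  obtain ⟨t, hexp, ht⟩ := exists_weierstrassFactor_eq_exp (m + e) hu
  have hm : (m : ℝ) * (1 / 2) ^ m ≤ 1 := by
    rw [one_div, inv_pow, mul_inv_le_iff₀ (by positivity), one_mul]
    exact_mod_cast (Nat.lt_two_pow_self (n := m)).le
  have hmt : ‖(m : ℂ) * t‖ ≤ (1 / 2) ^ e := by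
    rw [norm_mul, norm_natCast]
    calc (m : ℝ) * ‖t‖ ≤ m * (1 / 2) ^ (m + e) := by gcongr
      _ = m * (1 / 2) ^ m * (1 / 2) ^ e := by rw [pow_add, mul_assoc]
      _ ≤ (1 / 2) ^ e := mul_le_of_le_one_left (by positivity) hm
  rw [hexp, ← exp_nat_mul]
  exact (norm_exp_sub_one_le (hmt.trans (pow_le_one₀ (by norm_num) (by norm_num)))).trans
    (mul_le_mul_of_nonneg_left hmt zero_le_two)

/-- Normal convergence on compact subsets of `U`, in the form required by the infinite product
theorems: up to finitely many factors, `‖F i - 1‖ ≤ u i` on each compact set, with `u` summable. -/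
structure IsNormalProduct {ι : Type*} (U : Set ℂ) (F : ι → ℂ → ℂ) (u : ι → ℝ) : Prop where
  summable : Summable u
  differentiableOn : ∀ i, DifferentiableOn ℂ (F i) U
  bound : ∀ K ⊆ U, IsCompact K → ∀ᶠ i in cofinite, ∀ z ∈ K, ‖F i z - 1‖ ≤ u i

namespace IsNormalProduct

variable {ι : Type*} {U : Set ℂ} {F : ι → ℂ → ℂ} {u : ι → ℝ}

theorem hasProdLocallyUniformlyOn (hU : IsOpen U) (h : IsNormalProduct U F u) :
    HasProdLocallyUniformlyOn F (fun z => ∏' i, F i z) U := by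
  refine hasProdLocallyUniformlyOn_of_forall_compact hU fun K hKU hK => ?_
  simpa using Summable.hasProdUniformlyOn_one_add (f := fun i z => F i z - 1) hK h.summable
    (h.bound K hKU hK) fun i => ((h.differentiableOn i).continuousOn.mono hKU).sub
      continuousOn_const

theorem analyticOnNhd_tprod (hU : IsOpen U) (h : IsNormalProduct U F u) :
    AnalyticOnNhd ℂ (fun z => ∏' i, F i z) U := by
  refine DifferentiableOn.analyticOnNhd ?_ hU
  exact (hasProdLocallyUniformlyOn_iff_tendstoLocallyUniformlyOn.1
    (h.hasProdLocallyUniformlyOn hU)).differentiableOn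
      (.of_forall fun _ => .fun_finsetProd fun i _ => h.differentiableOn i) hU

theorem multipliable (hU : IsOpen U) (h : IsNormalProduct U F u) {z : ℂ} (hz : z ∈ U) :
    Multipliable fun i => F i z :=
  ((h.hasProdLocallyUniformlyOn hU).hasProd hz).multipliable

theorem tprod_ne_zero (h : IsNormalProduct U F u) {z : ℂ} (hz : z ∈ U)
    (hne : ∀ i, F i z ≠ 0) : ∏' i, F i z ≠ 0 := by
  have hsum : Summable fun i => ‖F i z - 1‖ := by
    refine .of_norm_bounded_eventually h.summable ?_
    filter_upwards [h.bound {z} (singleton_subset_iff.2 hz) isCompact_singleton] with i hi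
    simpa using hi z rfl
  simpa using tprod_one_add_ne_zero_of_summable (f := fun i => F i z - 1) (by simpa using hne) hsum

theorem update_one [DecidableEq ι] (h : IsNormalProduct U F u) (i : ι) :
    IsNormalProduct U (Function.update F i 1) u where
  summable := h.summable
  differentiableOn j := by
    rcases eq_or_ne j i with rfl | hj
    · simp
    · simpa [hj] using h.differentiableOn j
  bound K hKU hK := by
    have hne : ∀ᶠ j in cofinite, j ≠ i := by simp
    filter_upwards [h.bound K hKU hK, hne] with j hj hji
    simpa [hji] using hj

theorem analyticOrderAt_tprod_eq_zero (hU : IsOpen U) (h : IsNormalProduct U F u) {a : ℂ}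
    (ha : a ∈ U) (hne : ∀ i, F i a ≠ 0) : analyticOrderAt (fun z => ∏' i, F i z) a = 0 :=
  (h.analyticOnNhd_tprod hU a ha).analyticOrderAt_eq_zero.2 (h.tprod_ne_zero ha hne)

theorem analyticOrderAt_tprod (hU : IsOpen U) (h : IsNormalProduct U F u) {a : ℂ} (ha : a ∈ U)
    (i : ι) (hne : ∀ j ≠ i, F j a ≠ 0) :
    analyticOrderAt (fun z => ∏' i, F i z) a = analyticOrderAt (F i) a := by
  classical
  have hrest := h.update_one i
  have hsplit : (fun z => ∏' j, F j z) =ᶠ[𝓝 a]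
      F i * fun z => ∏' j, Function.update F i 1 j z := by
    filter_upwards [hU.mem_nhds ha] with z hz
    have hupd : (fun j => Function.update F i 1 j z) = Function.update (fun j => F j z) i 1 := by
      ext j
      rcases eq_or_ne j i with rfl | hj <;> simp [*]
    rw [Pi.mul_apply, hupd, Multipliable.tprod_eq_mul_tprod_ite' i]
    · exact congrArg (F i z * ·) (tprod_congr fun j => by rw [Function.update_apply])
    · rw [← hupd]
      exact hrest.multipliable hU hz
  have hzero : analyticOrderAt (fun z => ∏' j, Function.update F i 1 j z) a = 0 := by
    refine hrest.analyticOrderAt_tprod_eq_zero hU ha fun j => ?_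
    rcases eq_or_ne j i with rfl | hj
    · simp
    · simpa [hj] using hne j hj
  rw [analyticOrderAt_congr hsplit, analyticOrderAt_mul (((h.differentiableOn i).analyticOnNhd hU)
    a ha) (hrest.analyticOnNhd_tprod hU a ha), hzero, add_zero]

end IsNormalProduct
section Weierstrass

variable {U : Set ℂ} {m : ℂ → ℕ}

theorem finite_support_inter_innerCore (hm : {z | m z = 0} ∈ codiscreteWithin U) {r : ℝ}
    (hr : 0 < r) : (innerCore U r ∩ m.support).Finite :=
  (isCompact_innerCore U r).finite_sdiff_of_mem_codiscreteWithin
    (codiscreteWithin_mono (innerCore_subset hr) hm)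

theorem countable_inter_support (hU : IsOpen U) (hm : {z | m z = 0} ∈ codiscreteWithin U) :
    (U ∩ m.support).Countable := by
  have hcover : U ∩ m.support ⊆ ⋃ n : ℕ, innerCore U (n + 1) ∩ m.support := by
    rintro z ⟨hzU, hz⟩
    obtain ⟨r, hr, hzr⟩ :=
      exists_subset_innerCore hU isCompact_singleton (singleton_subset_iff.2 hzU)
    obtain ⟨n, hn⟩ := exists_nat_ge r
    exact mem_iUnion.2
      ⟨n, innerCore_mono U hr (hn.trans (lt_add_one _).le) (singleton_subset_iff.1 hzr), hz⟩
  exact (countable_iUnion fun n =>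
    (finite_support_inter_innerCore hm n.cast_add_one_pos).countable).mono hcover

theorem analyticOrderAt_weierstrassFactor_pow {g : ℂ → ℂ} {a : ℂ} (hg : AnalyticAt ℂ g a)
    (hga : g a ≠ 0) (N n : ℕ) :
    analyticOrderAt (fun z => weierstrassFactor N (1 - (z - a) * g z) ^ n) a = n := by
  have hE : Differentiable ℂ (weierstrassFactor N) := differentiable_weierstrassFactor N
  have hexp : Differentiable ℂ fun w => exp (-logTaylor (N + 1) (-w)) := by
    unfold logTaylor
    fun_prop
  have hu : AnalyticAt ℂ (fun z => 1 - (z - a) * g z) a := by fun_prop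
  have hcofactor : AnalyticAt ℂ
      (fun z => (g z * exp (-logTaylor (N + 1) (-(1 - (z - a) * g z)))) ^ n) a :=
    (hg.mul ((hexp.analyticAt _).fun_comp hu)).pow n
  refine (((hE.analyticAt _).fun_comp hu).pow n).analyticOrderAt_eq_natCast.2
    ⟨_, hcofactor, pow_ne_zero _ (mul_ne_zero hga (exp_ne_zero _)), .of_forall fun z => ?_⟩
  simp only [Pi.pow_apply, weierstrassFactor, smul_eq_mul, ← mul_pow, sub_sub_cancel, mul_assoc]

theorem exists_isNormalProduct_analyticOrderAt (hU : IsOpen U)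
    (hm : {z | m z = 0} ∈ codiscreteWithin U) :
    ∃ (F : ↥(U ∩ m.support) → ℂ → ℂ) (u : ↥(U ∩ m.support) → ℝ), IsNormalProduct U F u ∧
      (∀ a : ↥(U ∩ m.support), ∀ z ∈ U, z ≠ a → F a z ≠ 0) ∧
        ∀ a : ↥(U ∩ m.support), analyticOrderAt (F a) a = m a := by
  have : Countable ↥(U ∩ m.support) := (countable_inter_support hU hm).to_subtype
  obtain ⟨e, he⟩ := exists_injective_nat ↥(U ∩ m.support)
  choose g hg hg0 hgbound using fun a : ↥(U ∩ m.support) =>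
    exists_nonvanishing_norm_one_sub_mul_le hU (a : ℂ)
  refine ⟨fun a z => weierstrassFactor (m a + e a) (1 - (z - a) * g a z) ^ m a,
    fun a => 2 * (1 / 2) ^ e a, ⟨?_, fun a => ?_, fun K hKU hK => ?_⟩, fun a z hz hza => ?_,
    fun a => ?_⟩
  · exact (summable_geometric_two.comp_injective he).mul_left 2
  · have hga := hg a
    have hE := differentiable_weierstrassFactor (m a + e a)
    exact (hE.comp_differentiableOn (by fun_prop)).pow _
  · obtain ⟨r, hr, hKr⟩ := exists_subset_innerCore hU hK hKU
    have hfin : {a : ↥(U ∩ m.support) | (a : ℂ) ∈ innerCore U (2 * r)}.Finite :=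
      ((finite_support_inter_innerCore hm (r := 2 * r) (by positivity)).preimage
        Subtype.val_injective.injOn).subset fun b hb => ⟨hb, b.2.2⟩
    filter_upwards [hfin.compl_mem_cofinite] with a ha z hz
    exact norm_weierstrassFactor_pow_sub_one_le _ _ (hgbound a r hr ha z (hKr hz))
  · refine pow_ne_zero _ (weierstrassFactor_ne_zero _ fun h => ?_)
    rw [sub_eq_self, mul_eq_zero, sub_eq_zero] at h
    exact h.elim hza (hg0 a z hz)
  · exact analyticOrderAt_weierstrassFactor_pow (((hg a).analyticOnNhd hU) a a.2.1)
      (hg0 a a a.2.1) _ _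

theorem exists_analyticOnNhd_analyticOrderAt_eq (hU : IsOpen U)
    (hm : {z | m z = 0} ∈ codiscreteWithin U) :
    ∃ h : ℂ → ℂ, AnalyticOnNhd ℂ h U ∧ ∀ a ∈ U, analyticOrderAt h a = m a := by
  obtain ⟨F, u, hF, hF0, horder⟩ := exists_isNormalProduct_analyticOrderAt hU hm
  refine ⟨fun z => ∏' a, F a z, hF.analyticOnNhd_tprod hU, fun a ha => ?_⟩
  by_cases hma : m a = 0
  · rw [hma, Nat.cast_zero]
    refine hF.analyticOrderAt_tprod_eq_zero hU ha fun b => hF0 b a ha fun hab => ?_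
    exact b.2.2 (hab ▸ hma)
  · rw [hF.analyticOrderAt_tprod hU ha ⟨a, ha, hma⟩, horder]
    exact fun b hb => hF0 b a ha fun hab => hb (Subtype.ext hab.symm)

end Weierstrass

section GCD

variable {U : Set ℂ}

theorem exists_eqOn_mul_of_analyticOrderAt_le {f h : ℂ → ℂ} (hf : AnalyticOnNhd ℂ f U)
    (hh : AnalyticOnNhd ℂ h U) (hle : ∀ a ∈ U, analyticOrderAt h a ≤ analyticOrderAt f a)
    (htop : ∀ a ∈ U, analyticOrderAt h a ≠ ⊤) :
    ∃ q : ℂ → ℂ, AnalyticOnNhd ℂ q U ∧ EqOn f (h * q) U := by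
  have hquot : MeromorphicOn (f / h) U := hf.meromorphicOn.div hh.meromorphicOn
  have hq : AnalyticOnNhd ℂ (toMeromorphicNFOn (f / h) U) U := fun a ha => by
    refine (meromorphicNFOn_toMeromorphicNFOn (f / h) U
      ha).meromorphicOrderAt_nonneg_iff_analyticAt.1 ?_
    rw [meromorphicOrderAt_toMeromorphicNFOn hquot ha,
      meromorphicOrderAt_div (hf a ha).meromorphicAt (hh a ha).meromorphicAt,
      (hf a ha).meromorphicOrderAt_eq, (hh a ha).meromorphicOrderAt_eq]
    lift analyticOrderAt h a to ℕ using htop a ha with k hk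
    cases hn : analyticOrderAt f a with
    | top => simp
    | coe n =>
      have hkn : k ≤ n := by simpa [hn, ← hk] using hle a ha
      simp only [ENat.map_natCast]
      norm_cast
      omega
  refine ⟨_, hq, fun a ha => ?_⟩
  have hne : ∀ᶠ z in 𝓝[≠] a, h z ≠ 0 :=
    (hh a ha).eventually_eq_zero_or_eventually_ne_zero.resolve_left fun h0 =>
      htop a ha (analyticOrderAt_eq_top.2 h0)
  have hnear : f =ᶠ[𝓝[≠] a] h * toMeromorphicNFOn (f / h) U := by
    filter_upwards [hne, hquot.toMeromorphicNFOn_eq_self_on_nhdsNE ha] with z hz hqz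
    rw [Pi.mul_apply, hqz, Pi.div_apply, mul_div_cancel₀ _ hz]
  exact (((hf a ha).continuousAt.eventuallyEq_nhds_iff_eventuallyEq_nhdsNE
    ((hh a ha).mul (hq a ha)).continuousAt).1 hnear).self_of_nhds

theorem exists_common_factor {ι : Type*} {f : ι → ℂ → ℂ} (hU : IsOpen U) (hUc : IsPreconnected U)
    (hf : ∀ i, AnalyticOnNhd ℂ (f i) U) (hne : ∃ i, ∃ z ∈ U, f i z ≠ 0) :
    ∃ (h : ℂ → ℂ) (q : ι → ℂ → ℂ), (∀ i, AnalyticOnNhd ℂ (q i) U) ∧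
      (∀ i, EqOn (f i) (h * q i) U) ∧ ∀ z ∈ U, ∃ i, q i z ≠ 0 := by
  obtain ⟨i₀, z₀, hz₀, hi₀⟩ := hne
  have : Nonempty ι := ⟨i₀⟩
  have htop : ∀ a ∈ U, ⨅ i, analyticOrderAt (f i) a ≠ ⊤ := fun a ha => by
    refine ne_top_of_le_ne_top ?_ (iInf_le _ i₀)
    refine (hf i₀).analyticOrderAt_ne_top_of_isPreconnected hUc hz₀ ha ?_
    simp [(hf i₀ z₀ hz₀).analyticOrderAt_eq_zero.2 hi₀]
  have hcodiscrete : {a | (⨅ i, analyticOrderAt (f i) a).toNat = 0} ∈ codiscreteWithin U := by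
    filter_upwards [(hf i₀).preimage_zero_mem_codiscreteWithin hi₀ hz₀ ⟨⟨z₀, hz₀⟩, hUc⟩,
      self_mem_codiscreteWithin U] with a ha haU
    have h0 := (hf i₀ a haU).analyticOrderAt_eq_zero.2 ha
    simp [nonpos_iff_eq_zero.1 (h0 ▸ iInf_le (fun i => analyticOrderAt (f i) a) i₀)]
  obtain ⟨h, hh, horder⟩ := exists_analyticOnNhd_analyticOrderAt_eq hU hcodiscrete
  have horder' : ∀ a ∈ U, analyticOrderAt h a = ⨅ i, analyticOrderAt (f i) a := fun a ha => by
    rw [horder a ha, ENat.natCast_toNat (htop a ha)]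
  choose q hq hfq using fun i => exists_eqOn_mul_of_analyticOrderAt_le (hf i) hh
    (fun a ha => (horder' a ha).trans_le (iInf_le _ i)) fun a ha => horder' a ha ▸ htop a ha
  refine ⟨h, q, hq, hfq, fun a ha => ?_⟩
  obtain ⟨i, hi : analyticOrderAt (f i) a = _⟩ := ciInf_mem fun i => analyticOrderAt (f i) a
  refine ⟨i, (hq i a ha).analyticOrderAt_eq_zero.1 ?_⟩
  have hmul : analyticOrderAt h a + analyticOrderAt (q i) a = analyticOrderAt h a + 0 := by
    rw [← analyticOrderAt_mul (hh a ha) (hq i a ha), add_zero, horder' a ha, ← hi]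
    exact (analyticOrderAt_congr (eventuallyEq_of_mem (hU.mem_nhds ha) (hfq i))).symm
  exact WithTop.add_left_cancel (horder' a ha ▸ htop a ha) hmul

end GCD

/-- Linear dependence of two vectors of `R²`, expressed by the vanishing of their determinant. -/
def IsParallel {R : Type*} [CommRing R] (u v : Fin 2 → R) : Prop := u 0 * v 1 = u 1 * v 0

theorem IsParallel.symm {R : Type*} [CommRing R] {u v : Fin 2 → R} (h : IsParallel u v) :
    IsParallel v u := by
  unfold IsParallel at *
  linear_combination -h

theorem IsParallel.trans {R : Type*} [CommRing R] [IsDomain R] {u v w : Fin 2 → R} (hv : v ≠ 0)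
    (huv : IsParallel u v) (hvw : IsParallel v w) : IsParallel u w := by
  unfold IsParallel at *
  rcases Fin.exists_fin_two.1 (Function.ne_iff.1 hv) with h | h <;> refine mul_left_cancel₀ h ?_
  · linear_combination w 0 * huv + u 0 * hvw
  · linear_combination w 1 * huv + u 1 * hvw

theorem IsParallel.exists_eq_smul {K : Type*} [Field K] {u v : Fin 2 → K} (hv : v ≠ 0)
    (huv : IsParallel u v) : ∃ c : K, u = c • v := by
  obtain ⟨i, hi⟩ := Function.ne_iff.1 hv
  unfold IsParallel at huv
  refine ⟨u i / v i, funext fun j => ?_⟩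
  rw [Pi.smul_apply, smul_eq_mul, div_mul_eq_mul_div, eq_div_iff hi]
  fin_cases i <;> fin_cases j <;> simp [huv, mul_comm]

theorem exists_nonvanishing_forall_eq_smul {ι : Type*} {f : ι → ℂ → Fin 2 → ℂ} {U : Set ℂ}
    (hU : IsOpen U) (hUc : IsPreconnected U) (hf : ∀ i, AnalyticOnNhd ℂ (f i) U)
    (hpar : ∀ z ∈ U, ∀ i j, IsParallel (f i z) (f j z)) :
    ∃ α : ℂ → Fin 2 → ℂ, AnalyticOnNhd ℂ α U ∧ (∀ z ∈ U, α z ≠ 0) ∧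
      ∀ z ∈ U, ∀ i, ∃ c : ℂ, f i z = c • α z := by
  by_cases hne : ∃ i, ∃ z ∈ U, f i z ≠ 0
  swap
  · push Not at hne
    exact ⟨fun _ => 1, analyticOnNhd_const, fun _ _ => one_ne_zero,
      fun z hz i => ⟨0, by rw [hne i z hz, zero_smul]⟩⟩
  obtain ⟨i, z₀, hz₀, hi⟩ := hne
  obtain ⟨k, hk⟩ := Function.ne_iff.1 hi
  obtain ⟨h, q, hq, hfq, hq0⟩ := exists_common_factor hU hUc (analyticOnNhd_pi_iff.1 (hf i))
    ⟨k, z₀, hz₀, hk⟩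
  have hα : ∀ z ∈ U, (fun k => q k z) ≠ 0 := fun z hz => Function.ne_iff.2 (hq0 z hz)
  have hfα : ∀ z ∈ U, f i z = h z • fun k => q k z := fun z hz => funext fun k => hfq k hz
  have hdet : ∀ j, AnalyticOnNhd ℂ (fun z => f j z 0 * q 1 z - f j z 1 * q 0 z) U := fun j =>
    ((analyticOnNhd_pi_iff.1 (hf j) 0).mul (hq 1)).sub
      ((analyticOnNhd_pi_iff.1 (hf j) 1).mul (hq 0))
  have hzero := (forall_eq_zero_or_forall_eq_zero (F := fun _ : Unit => f i) hU hUc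
    (fun _ => (hf i).continuousOn) hdet fun z hz => ?_).resolve_left
      fun h0 => hi (h0 z₀ hz₀ ())
  · exact ⟨fun z k => q k z, analyticOnNhd_pi_iff.2 hq, hα, fun z hz j =>
      IsParallel.exists_eq_smul (hα z hz) (sub_eq_zero.1 (hzero z hz j))⟩
  · refine or_iff_not_imp_left.2 fun hfi j => sub_eq_zero.2 ?_
    refine (hpar z hz j i).trans (fun h0 => hfi fun _ => h0) (?_ : IsParallel _ fun k => q k z)
    rw [hfα z hz]
    simp [IsParallel, mul_assoc, mul_comm (q 0 z)]

/-! ### Null vectors as rank-one matrices -/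

theorem forall_or_forall_of_equivalence {ι : Type*} {r s : ι → ι → Prop} (hr : Equivalence r)
    (hs : Equivalence s) (h : ∀ i j, r i j ∨ s i j) : (∀ i j, r i j) ∨ ∀ i j, s i j := by
  by_contra! hcon
  obtain ⟨⟨i, j, hij⟩, k, l, hkl⟩ := hcon
  have hs_ij : s i j := (h i j).resolve_left hij
  have hs_i : ∀ m, s m i := fun m => by
    rcases h m i with hmi | hmi
    · have hmj : s m j := (h m j).resolve_left fun hmj => hij (hr.trans (hr.symm hmi) hmj)
      exact hs.trans hmj (hs.symm hs_ij)
    · exact hmi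
  exact hkl (hs.trans (hs_i k) (hs.symm (hs_i l)))

section TwoByTwo

variable {K ι : Type*} [Field K]

theorem IsParallel.smul_smul {u v : Fin 2 → K} (h : IsParallel u v) (c d : K) :
    IsParallel (c • u) (d • v) := by
  unfold IsParallel at *
  simp only [Pi.smul_apply, smul_eq_mul]
  linear_combination c * d * h

theorem IsParallel.equivalence {f : ι → Fin 2 → K} (hf : ∀ i, f i ≠ 0) :
    Equivalence fun i j => IsParallel (f i) (f j) :=
  ⟨fun _ => mul_comm _ _, IsParallel.symm, fun {_ j _} => IsParallel.trans (hf j)⟩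

theorem exists_eq_vecMulVec_of_det_eq_zero {M : Matrix (Fin 2) (Fin 2) K} (hM : M.det = 0) :
    ∃ a b : Fin 2 → K, M = vecMulVec a b := by
  have hpar : IsParallel (M 1) (M 0) := by
    unfold IsParallel
    linear_combination M.det_fin_two - hM
  by_cases h0 : M 0 = 0
  · exact ⟨![0, 1], M 1, Matrix.ext <| Fin.forall_fin_two.2
      ⟨fun l => by simp [vecMulVec_apply, congrFun h0 l], fun l => by simp [vecMulVec_apply]⟩⟩
  · obtain ⟨c, hc⟩ := hpar.exists_eq_smul h0
    exact ⟨![1, c], M 0, Matrix.ext <| Fin.forall_fin_two.2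
      ⟨fun l => by simp [vecMulVec_apply], fun l => by simp [vecMulVec_apply, hc]⟩⟩

/-- The symmetric bilinear form on `2 × 2` matrices polarizing twice the determinant. -/
def polarDet (M N : Matrix (Fin 2) (Fin 2) K) : K :=
  M 0 0 * N 1 1 + M 1 1 * N 0 0 - M 0 1 * N 1 0 - M 1 0 * N 0 1

theorem polarDet_vecMulVec (a b c d : Fin 2 → K) :
    polarDet (vecMulVec a b) (vecMulVec c d) =
      (a 0 * c 1 - a 1 * c 0) * (b 0 * d 1 - b 1 * d 0) := by
  simp only [polarDet, vecMulVec_apply]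
  ring

theorem forall_isParallel_row_or_forall_isParallel_col [NeZero (2 : K)]
    {M : ι → Matrix (Fin 2) (Fin 2) K} (hM : ∀ i j, polarDet (M i) (M j) = 0) :
    (∀ p q : ι × Fin 2, IsParallel ((M p.1).row p.2) ((M q.1).row q.2)) ∨
      ∀ p q : ι × Fin 2, IsParallel ((M p.1).col p.2) ((M q.1).col q.2) := by
  have hdet : ∀ i, (M i).det = 0 := fun i => by
    have h := hM i i
    unfold polarDet at h
    rw [det_fin_two]
    refine mul_left_cancel₀ (two_ne_zero (α := K)) ?_
    linear_combination h
  choose a b hab using fun i => exists_eq_vecMulVec_of_det_eq_zero (hdet i)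
  have hrow : ∀ i k, (M i).row k = a i k • b i := fun i k => by rw [hab]; rfl
  have hcol : ∀ i k, (M i).col k = b i k • a i := fun i k => by
    rw [hab]; exact funext fun _ => mul_comm _ _
  have ha : ∀ i : {i // M i ≠ 0}, a i ≠ 0 := fun i h0 => i.2 (by rw [hab, h0, zero_vecMulVec])
  have hb : ∀ i : {i // M i ≠ 0}, b i ≠ 0 := fun i h0 => i.2 (by rw [hab, h0, vecMulVec_zero])
  have hpair : ∀ i j : {i // M i ≠ 0}, IsParallel (b i) (b j) ∨ IsParallel (a i) (a j) :=
    fun i j => by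
      have h := hM i j
      rw [hab, hab, polarDet_vecMulVec, mul_eq_zero, sub_eq_zero, sub_eq_zero] at h
      exact h.symm
  refine (forall_or_forall_of_equivalence (IsParallel.equivalence hb)
    (IsParallel.equivalence ha) hpair).imp (fun h p q => ?_) fun h p q => ?_ <;>
  · by_cases hp : M p.1 = 0
    · simp [hp, IsParallel]
    by_cases hq : M q.1 = 0
    · simp [hq, IsParallel]
    simp only [hrow, hcol]
    exact (h ⟨p.1, hp⟩ ⟨q.1, hq⟩).smul_smul _ _

end TwoByTwo

section Lorentz

variable {R : Type*} [CommRing R]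

/-- The bilinear form of signature `(1, 3)` with matrix `diag(-1, 1, 1, 1)`; `vecTail` is the
spatial part of a vector. -/
def lorentzForm (x y : Fin 4 → R) : R := -(x 0 * y 0) + vecTail x ⬝ᵥ vecTail y

theorem lorentzForm_apply (x y : Fin 4 → R) :
    lorentzForm x y = -(x 0 * y 0) + x 1 * y 1 + x 2 * y 2 + x 3 * y 3 := by
  simp only [lorentzForm, vec3_dotProduct]
  change -(x 0 * y 0) + (x 1 * y 1 + x 2 * y 2 + x 3 * y 3) = _
  ring

theorem transpose_mul_diagonal_mul_apply {m n : Type*} (A : Matrix (Fin 4) m R)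
    (B : Matrix (Fin 4) n R) (i : m) (j : n) :
    (Aᵀ * Matrix.diagonal ![(-1 : R), 1, 1, 1] * B) i j = lorentzForm (A.col i) (B.col j) := by
  rw [mul_apply, lorentzForm_apply]
  simp only [mul_diagonal, Fin.sum_univ_four, transpose_apply, cons_val, col_apply]
  ring

theorem dotProduct_diagonal_mulVec (x y : Fin 4 → R) :
    x ⬝ᵥ (Matrix.diagonal ![(-1 : R), 1, 1, 1] *ᵥ y) = lorentzForm x y := by
  simp [lorentzForm_apply, dotProduct, mulVec_diagonal, Fin.sum_univ_four]

theorem lorentzForm_mulVec {S : Matrix (Fin 4) (Fin 4) R}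
    (hS : Sᵀ * Matrix.diagonal ![(-1 : R), 1, 1, 1] * S = Matrix.diagonal ![(-1 : R), 1, 1, 1])
    (x y : Fin 4 → R) : lorentzForm (S *ᵥ x) (S *ᵥ y) = lorentzForm x y := by
  simp only [← dotProduct_diagonal_mulVec]
  conv_rhs => rw [← hS]
  rw [← mulVec_mulVec, ← mulVec_mulVec, dotProduct_mulVec x, vecMul_transpose]

/-- The `2 × 2` matrix of a vector, written with a square root `J` of `-1`. Its determinant is minus
the quadratic form, and replacing `J` by `-J` transposes it. -/
def spinorMatrix (J : R) (x : Fin 4 → R) : Matrix (Fin 2) (Fin 2) R :=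
  !![x 0 + x 1, x 2 + J * x 3; x 2 - J * x 3, x 0 - x 1]

theorem spinorMatrix_neg (J : R) (x : Fin 4 → R) :
    spinorMatrix (-J) x = (spinorMatrix J x)ᵀ := by
  ext i j
  fin_cases i <;> fin_cases j <;> simp [spinorMatrix, sub_eq_add_neg]

end Lorentz

section Spinor

variable {K : Type*} [Field K] {J : K}

theorem polarDet_spinorMatrix (hJ : J ^ 2 = -1) (x y : Fin 4 → K) :
    polarDet (spinorMatrix J x) (spinorMatrix J y) = -2 * lorentzForm x y := by
  simp only [polarDet, spinorMatrix, lorentzForm_apply, of_apply, cons_val]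
  linear_combination 2 * x 3 * y 3 * hJ

/-- The two vectors whose spinor matrices have rows `2 α, 0` and `0, 2 α`. They span the vectors
whose spinor matrix has all its rows proportional to `α`. -/
def spinorFrame (J : K) (α : Fin 2 → K) : Fin 2 → Fin 4 → K :=
  ![![α 0, α 0, α 1, -(J * α 1)], ![α 1, -α 1, α 0, J * α 0]]

/-- A basis of a maximal isotropic subspace for the Lorentz form. -/
structure IsNullFrame (b : Fin 2 → Fin 4 → K) : Prop where
  linearIndependent : LinearIndependent K b
  isotropic : ∀ k l, lorentzForm (b k) (b l) = 0

theorem isNullFrame_spinorFrame [NeZero (2 : K)] (hJ : J ^ 2 = -1) {α : Fin 2 → K} (hα : α ≠ 0) :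
    IsNullFrame (spinorFrame J α) where
  linearIndependent := by
    refine LinearIndependent.pair_iff.2 fun c d h => ?_
    have h0 := congrFun h 0
    have h1 := congrFun h 1
    have h2 := congrFun h 2
    have h3 := congrFun h 3
    simp only [Pi.add_apply, Pi.smul_apply, cons_val, smul_eq_mul, Pi.zero_apply] at h0 h1 h2 h3
    have hcd : ∀ k, 2 * (c * α k) = 0 ∧ 2 * (d * α k) = 0 := Fin.forall_fin_two.2
      ⟨⟨by linear_combination h0 + h1,
          by linear_combination h2 - J * h3 + (d * α 0 - c * α 1) * hJ⟩,
        by linear_combination h2 + J * h3 + (c * α 1 - d * α 0) * hJ, by linear_combination h0 - h1⟩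
    obtain ⟨k, hk : α k ≠ 0⟩ := Function.ne_iff.1 hα
    simpa [two_ne_zero, hk] using hcd k
  isotropic := by
    refine Fin.forall_fin_two.2 ⟨Fin.forall_fin_two.2 ⟨?_, ?_⟩, Fin.forall_fin_two.2 ⟨?_, ?_⟩⟩ <;>
      simp only [spinorFrame, lorentzForm_apply, cons_val]
    · linear_combination α 1 ^ 2 * hJ
    · linear_combination -α 0 * α 1 * hJ
    · linear_combination -α 0 * α 1 * hJ
    · linear_combination α 0 ^ 2 * hJ

theorem mem_span_range_spinorFrame [NeZero (2 : K)] (hJ : J ^ 2 = -1) {α : Fin 2 → K}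
    {x : Fin 4 → K} (hx : ∀ k, ∃ c : K, (spinorMatrix J x).row k = c • α) :
    x ∈ Submodule.span K (range (spinorFrame J α)) := by
  obtain ⟨⟨c, hc⟩, d, hd⟩ := Fin.forall_fin_two.1 hx
  have hc0 := congrFun hc 0
  have hc1 := congrFun hc 1
  have hd0 := congrFun hd 0
  have hd1 := congrFun hd 1
  simp only [spinorMatrix, row_apply, of_apply, cons_val, Pi.smul_apply, smul_eq_mul]
    at hc0 hc1 hd0 hd1
  have h2x : (2 : K) • x = c • spinorFrame J α 0 + d • spinorFrame J α 1 := by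
    ext i
    fin_cases i <;> simp only [spinorFrame, Fin.zero_eta, Fin.mk_one, Fin.reduceFinMk,
      Pi.add_apply, Pi.smul_apply, smul_eq_mul, cons_val]
    · linear_combination hc0 + hd1
    · linear_combination hc0 - hd1
    · linear_combination hc1 + hd0
    · linear_combination J * hd0 - J * hc1 + 2 * x 3 * hJ
  rw [← Submodule.smul_mem_iff _ (two_ne_zero (α := K)), h2x]
  exact add_mem (Submodule.smul_mem _ _ (Submodule.subset_span ⟨0, rfl⟩))
    (Submodule.smul_mem _ _ (Submodule.subset_span ⟨1, rfl⟩))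

end Spinor

section HolomorphicFrame

variable {ι : Type*} {U : Set ℂ} {x : ι → ℂ → Fin 4 → ℂ}

theorem analyticOnNhd_spinorMatrix (J : ℂ) {y : ℂ → Fin 4 → ℂ} (hy : AnalyticOnNhd ℂ y U)
    (k l : Fin 2) : AnalyticOnNhd ℂ (fun z => spinorMatrix J (y z) k l) U := by
  have hyi := analyticOnNhd_pi_iff.1 hy
  fin_cases k <;> fin_cases l
  · exact (hyi 0).add (hyi 1)
  · exact (hyi 2).add (analyticOnNhd_const.mul (hyi 3))
  · exact (hyi 2).sub (analyticOnNhd_const.mul (hyi 3))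
  · exact (hyi 0).sub (hyi 1)

theorem exists_forall_isParallel_spinorMatrix (hU : IsOpen U) (hUc : IsPreconnected U)
    (hx : ∀ i, AnalyticOnNhd ℂ (x i) U) (hnull : ∀ z ∈ U, ∀ i j, lorentzForm (x i z) (x j z) = 0) :
    ∃ J : ℂ, J ^ 2 = -1 ∧ ∀ z ∈ U, ∀ p q : ι × Fin 2,
      IsParallel ((spinorMatrix J (x p.1 z)).row p.2) ((spinorMatrix J (x q.1 z)).row q.2) := by
  let M (i : ι) (z : ℂ) := spinorMatrix I (x i z)
  have hM : ∀ i k l, AnalyticOnNhd ℂ (fun z => M i z k l) U := fun i =>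
    analyticOnNhd_spinorMatrix I (hx i)
  let F (p : (ι × Fin 2) × ι × Fin 2) (z : ℂ) :=
    M p.1.1 z p.1.2 0 * M p.2.1 z p.2.2 1 - M p.1.1 z p.1.2 1 * M p.2.1 z p.2.2 0
  let G (p : (ι × Fin 2) × ι × Fin 2) (z : ℂ) :=
    M p.1.1 z 0 p.1.2 * M p.2.1 z 1 p.2.2 - M p.1.1 z 1 p.1.2 * M p.2.1 z 0 p.2.2
  have hF : ∀ p, ContinuousOn (F p) U := fun p =>
    (((hM _ _ _).mul (hM _ _ _)).sub ((hM _ _ _).mul (hM _ _ _))).continuousOn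
  have hG : ∀ p, AnalyticOnNhd ℂ (G p) U := fun p =>
    ((hM _ _ _).mul (hM _ _ _)).sub ((hM _ _ _).mul (hM _ _ _))
  have hFG : ∀ z ∈ U, (∀ p, F p z = 0) ∨ ∀ p, G p z = 0 := fun z hz =>
    (forall_isParallel_row_or_forall_isParallel_col (M := fun i => M i z) fun i j => by
      rw [polarDet_spinorMatrix I_sq, hnull z hz, mul_zero]).imp
      (fun h p => sub_eq_zero.2 (h p.1 p.2)) fun h p => sub_eq_zero.2 (h p.1 p.2)
  rcases forall_eq_zero_or_forall_eq_zero hU hUc hF hG hFG with h | h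
  · exact ⟨I, I_sq, fun z hz p q => sub_eq_zero.1 (h z hz (p, q))⟩
  · refine ⟨-I, by rw [neg_sq, I_sq], fun z hz p q => ?_⟩
    simp only [spinorMatrix_neg]
    exact sub_eq_zero.1 (h z hz (p, q))

theorem exists_isNullFrame_forall_mem_span (hU : IsOpen U) (hUc : IsPreconnected U)
    (hx : ∀ i, AnalyticOnNhd ℂ (x i) U) (hnull : ∀ z ∈ U, ∀ i j, lorentzForm (x i z) (x j z) = 0) :
    ∃ r : ℂ → Fin 2 → Fin 4 → ℂ, (∀ k i, AnalyticOnNhd ℂ (fun z => r z k i) U) ∧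
      (∀ z ∈ U, IsNullFrame (r z)) ∧ ∀ z ∈ U, ∀ i, x i z ∈ Submodule.span ℂ (range (r z)) := by
  obtain ⟨J, hJ, hpar⟩ := exists_forall_isParallel_spinorMatrix hU hUc hx hnull
  obtain ⟨α, hα, hα0, hrow⟩ := exists_nonvanishing_forall_eq_smul hU hUc
    (f := fun (p : ι × Fin 2) z => (spinorMatrix J (x p.1 z)).row p.2)
    (fun p => analyticOnNhd_pi_iff.2 (analyticOnNhd_spinorMatrix J (hx p.1) p.2)) hpar
  have hαk := analyticOnNhd_pi_iff.1 hα
  refine ⟨fun z => spinorFrame J (α z), fun k i => ?_,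
    fun z hz => isNullFrame_spinorFrame hJ (hα0 z hz),
    fun z hz i => mem_span_range_spinorFrame hJ fun k => hrow z hz (i, k)⟩
  fin_cases k <;> fin_cases i
  exacts [hαk 0, hαk 0, hαk 1, (analyticOnNhd_const.mul (hαk 1)).neg, hαk 1, (hαk 1).neg, hαk 0,
    analyticOnNhd_const.mul (hαk 0)]

end HolomorphicFrame

/-! ### Real frames adapted to an isotropic plane -/

section NullPlane

theorem not_linearIndependent_pair_of_dotProduct_eq_zero {K : Type*} [Field K] {p q : Fin 3 → K}
    (hpp : p ⬝ᵥ p = 0) (hpq : p ⬝ᵥ q = 0) (hqq : q ⬝ᵥ q = 0) :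
    ¬LinearIndependent K ![p, q] := by
  intro hli
  have hw : p ⨯₃ q ≠ 0 := crossProduct_ne_zero_iff_linearIndependent.2 hli
  have exists_smul_eq : ∀ {r : Fin 3 → K}, r ≠ 0 → r ⨯₃ (p ⨯₃ q) = 0 → ∃ c : K, c • r = p ⨯₃ q :=
    fun hr hrw => by
      by_contra! h
      exact crossProduct_ne_zero_iff_linearIndependent.2 ((LinearIndependent.pair_iff' hr).2 h) hrw
  obtain ⟨c, hc : c • p = _⟩ := exists_smul_eq (hli.ne_zero 0) <| by
    simp [cross_cross_eq_smul_sub_smul', hpp, hpq]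
  obtain ⟨d, hd : d • q = _⟩ := exists_smul_eq (hli.ne_zero 1) <| by
    simp [cross_cross_eq_smul_sub_smul', hqq, hpq]
  have hc0 := (LinearIndependent.pair_iff.1 hli c (-d) (by rw [hc, neg_smul, hd, add_neg_cancel])).1
  exact hw (by rw [← hc, hc0, zero_smul])

variable {K : Type*} [Field K] {b : Fin 2 → Fin 4 → K}

theorem IsNullFrame.mulVec {S : Matrix (Fin 4) (Fin 4) K} (hb : IsNullFrame b)
    (hS : Sᵀ * Matrix.diagonal ![(-1 : K), 1, 1, 1] * S = Matrix.diagonal ![(-1 : K), 1, 1, 1]) :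
    IsNullFrame fun k => S *ᵥ b k where
  linearIndependent := by
    have hdet : IsUnit (Sᵀ * Matrix.diagonal ![(-1 : K), 1, 1, 1] * S).det := by
      rw [hS]
      simp [det_diagonal, Fin.prod_univ_four]
    have hSu : IsUnit S := (isUnit_iff_isUnit_det S).2 <|
      isUnit_of_mul_isUnit_right (by rwa [det_mul] at hdet)
    exact hb.linearIndependent.map' S.mulVecLin
      (LinearMap.ker_eq_bot.2 (mulVec_injective_of_isUnit hSu))
  isotropic k l := by rw [lorentzForm_mulVec hS, hb.isotropic]

/-- The spatial part of the vector of the plane spanned by `b 0` and `b 1` whose time coordinate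
vanishes; it is unique up to scale. -/
def spatialNullVector (b : Fin 2 → Fin 4 → K) : Fin 3 → K :=
  b 0 0 • vecTail (b 1) - b 1 0 • vecTail (b 0)

theorem IsNullFrame.dotProduct_vecTail (hb : IsNullFrame b) (k l : Fin 2) :
    vecTail (b k) ⬝ᵥ vecTail (b l) = b k 0 * b l 0 :=
  neg_add_eq_zero.1 (hb.isotropic k l) |>.symm

theorem IsNullFrame.spatialNullVector_dotProduct_vecTail (hb : IsNullFrame b) (k : Fin 2) :
    spatialNullVector b ⬝ᵥ vecTail (b k) = 0 := by
  simp only [spatialNullVector, sub_dotProduct, smul_dotProduct, hb.dotProduct_vecTail, smul_eq_mul]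
  ring

theorem IsNullFrame.spatialNullVector_dotProduct_self (hb : IsNullFrame b) :
    spatialNullVector b ⬝ᵥ spatialNullVector b = 0 := by
  have h : spatialNullVector b ⬝ᵥ (b 0 0 • vecTail (b 1) - b 1 0 • vecTail (b 0)) = 0 := by
    simp [dotProduct_sub, hb.spatialNullVector_dotProduct_vecTail]
  exact h

theorem IsNullFrame.spatialNullVector_ne_zero (hb : IsNullFrame b) : spatialNullVector b ≠ 0 := by
  intro h0
  have hli := LinearIndependent.pair_iff.1 (show LinearIndependent K ![b 0, b 1] from by
    convert hb.linearIndependent using 1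
    exact funext (Fin.forall_fin_two.2 ⟨rfl, rfl⟩))
  have htail : ∀ {c d : K}, c * b 0 0 + d * b 1 0 = 0 →
      c • vecTail (b 0) + d • vecTail (b 1) = 0 → c = 0 ∧ d = 0 := fun h h' =>
    hli _ _ (funext (Fin.cases h (congrFun h')))
  have h00 := htail (c := -b 1 0) (d := b 0 0) (by ring) (by rw [← h0, spatialNullVector]; module)
  refine not_linearIndependent_pair_of_dotProduct_eq_zero (p := vecTail (b 0)) (q := vecTail (b 1))
    ?_ ?_ ?_ (LinearIndependent.pair_iff.2 fun c d => htail ?_)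
  all_goals simp [hb.dotProduct_vecTail, h00.2, neg_eq_zero.1 h00.1]

end NullPlane

section OrthonormalPair

/-- Two orthogonal vectors with `u ⬝ᵥ u = v ⬝ᵥ v = 1`, for the bilinear (not sesquilinear) dot
product. -/
structure IsOrthonormalPair {ι R : Type*} [Fintype ι] [CommRing R] (u v : ι → R) : Prop where
  left : u ⬝ᵥ u = 1
  right : v ⬝ᵥ v = 1
  orthogonal : u ⬝ᵥ v = 0

theorem IsOrthonormalPair.map {ι R S : Type*} [Fintype ι] [CommRing R] [CommRing S] {u v : ι → R}
    (h : IsOrthonormalPair u v) (f : R →+* S) : IsOrthonormalPair (f ∘ u) (f ∘ v) where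
  left := by rw [← f.map_dotProduct, h.left, f.map_one]
  right := by rw [← f.map_dotProduct, h.right, f.map_one]
  orthogonal := by rw [← f.map_dotProduct, h.orthogonal, f.map_zero]

theorem IsOrthonormalPair.smul_right {ι R : Type*} [Fintype ι] [CommRing R] {u v : ι → R}
    (h : IsOrthonormalPair u v) {σ : R} (hσ : σ * σ = 1) : IsOrthonormalPair u (σ • v) where
  left := h.left
  right := by rw [smul_dotProduct, dotProduct_smul, h.right, smul_eq_mul, smul_eq_mul, mul_one, hσ]
  orthogonal := by rw [dotProduct_smul, h.orthogonal, smul_zero]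

variable {ι : Type*} [Fintype ι]

theorem re_dotProduct_re_eq_im_dotProduct_im {t : ι → ℂ} (ht : t ⬝ᵥ t = 0) :
    (re ∘ t) ⬝ᵥ (re ∘ t) = (im ∘ t) ⬝ᵥ (im ∘ t) := by
  simpa [dotProduct, sub_eq_zero] using congrArg re ht

theorem re_dotProduct_im_eq_zero {t : ι → ℂ} (ht : t ⬝ᵥ t = 0) : (re ∘ t) ⬝ᵥ (im ∘ t) = 0 := by
  have h := congrArg im ht
  simp only [dotProduct, im_sum, mul_im, mul_comm (im _), ← two_mul, ← Finset.mul_sum,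
    zero_im] at h
  exact (mul_eq_zero.1 h).resolve_left two_ne_zero

theorem re_dotProduct_re_pos {t : ι → ℂ} (ht : t ⬝ᵥ t = 0) (ht0 : t ≠ 0) :
    0 < (re ∘ t) ⬝ᵥ (re ∘ t) := by
  have hnonneg : 0 ≤ (re ∘ t) ⬝ᵥ (re ∘ t) := Finset.sum_nonneg fun _ _ => mul_self_nonneg _
  refine hnonneg.lt_of_ne' fun h0 => ht0 (funext fun i => Complex.ext ?_ ?_)
  · exact congrFun (dotProduct_self_eq_zero.1 h0) i
  · exact congrFun (dotProduct_self_eq_zero.1 ((re_dotProduct_re_eq_im_dotProduct_im ht) ▸ h0)) i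

theorem isOrthonormalPair_re_im {t : ι → ℂ} (ht : t ⬝ᵥ t = 0) (ht0 : t ≠ 0) :
    IsOrthonormalPair ((√((re ∘ t) ⬝ᵥ (re ∘ t)))⁻¹ • (re ∘ t))
      ((√((re ∘ t) ⬝ᵥ (re ∘ t)))⁻¹ • (im ∘ t)) := by
  have hpos := re_dotProduct_re_pos ht ht0
  have hsq := Real.mul_self_sqrt hpos.le
  have hne := (Real.sqrt_pos.2 hpos).ne'
  constructor <;> simp only [smul_dotProduct, dotProduct_smul, smul_eq_mul]
  · field_simp
    linarith
  · rw [← re_dotProduct_re_eq_im_dotProduct_im ht]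
    field_simp
    linarith
  · rw [re_dotProduct_im_eq_zero ht, mul_zero, mul_zero]

theorem exists_analyticOnNhd_isOrthonormalPair {E : Type*} [NormedAddCommGroup E] [NormedSpace ℝ E]
    {U : Set E} {t : E → ι → ℂ} (ht : ∀ i, AnalyticOnNhd ℝ (fun z => t z i) U)
    (hnull : ∀ z ∈ U, t z ⬝ᵥ t z = 0) (ht0 : ∀ z ∈ U, t z ≠ 0) :
    ∃ u v : E → ι → ℝ, (∀ i, AnalyticOnNhd ℝ (fun z => u z i) U) ∧
      (∀ i, AnalyticOnNhd ℝ (fun z => v z i) U) ∧ (∀ z ∈ U, IsOrthonormalPair (u z) (v z)) ∧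
      ∀ z, ∃ c : ℂ, ((ofReal ∘ u z) + I • (ofReal ∘ v z)) = c • t z := by
  have hre : ∀ i, AnalyticOnNhd ℝ (fun z => (t z i).re) U := fun i z hz =>
    (reCLM.analyticAt _).fun_comp (ht i z hz)
  have him : ∀ i, AnalyticOnNhd ℝ (fun z => (t z i).im) U := fun i z hz =>
    (imCLM.analyticAt _).fun_comp (ht i z hz)
  let N (z : E) : ℝ := (re ∘ t z) ⬝ᵥ (re ∘ t z)
  have hN : AnalyticOnNhd ℝ N U := fun z hz =>
    Finset.analyticAt_fun_sum _ fun i _ => (hre i z hz).mul (hre i z hz)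
  have hscale : AnalyticOnNhd ℝ (fun z => (√(N z))⁻¹) U := fun z hz => by
    have hpos := re_dotProduct_re_pos (hnull z hz) (ht0 z hz)
    exact ((Real.contDiffAt_sqrt hpos.ne').analyticAt.fun_comp (f := N) (hN z hz)).fun_inv
      (Real.sqrt_pos.2 hpos).ne'
  refine ⟨_, _, fun i => hscale.mul (hre i), fun i => hscale.mul (him i),
    fun z hz => isOrthonormalPair_re_im (hnull z hz) (ht0 z hz),
    fun z => ⟨((√(N z))⁻¹ : ℝ), funext fun i => ?_⟩⟩
  apply Complex.ext <;> simp [N]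

end OrthonormalPair

section LorentzFrame

/-- The matrix of the rest frame with spatial axes `u ⨯₃ v`, `u`, `v`. -/
def lorentzFrame {R : Type*} [CommRing R] (u v : Fin 3 → R) : Matrix (Fin 4) (Fin 4) R :=
  Matrix.of ![vecCons 1 0, vecCons 0 (u ⨯₃ v), vecCons 0 u, vecCons 0 v]

variable {R S : Type*} [CommRing R] [CommRing S]

theorem lorentzFrame_mulVec (u v : Fin 3 → R) (x : Fin 4 → R) :
    lorentzFrame u v *ᵥ x =
      ![x 0, u ⨯₃ v ⬝ᵥ vecTail x, u ⬝ᵥ vecTail x, v ⬝ᵥ vecTail x] := by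
  ext i
  fin_cases i <;> simp [lorentzFrame, mulVec, cons_dotProduct, vecHead]

theorem map_lorentzFrame (f : R →+* S) (u v : Fin 3 → R) :
    (lorentzFrame u v).map f = lorentzFrame (f ∘ u) (f ∘ v) := by
  ext i j
  fin_cases i <;> fin_cases j <;> simp [lorentzFrame, cross_apply]

theorem IsOrthonormalPair.transpose_lorentzFrame_mul {u v : Fin 3 → R} (h : IsOrthonormalPair u v) :
    (lorentzFrame u v)ᵀ * Matrix.diagonal ![(-1 : R), 1, 1, 1] * lorentzFrame u v =
      Matrix.diagonal ![(-1 : R), 1, 1, 1] := by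
  set D := Matrix.diagonal ![(-1 : R), 1, 1, 1]
  have hvu : v ⬝ᵥ u = 0 := by rw [dotProduct_comm, h.orthogonal]
  have hD : D * D = 1 := by
    rw [diagonal_mul_diagonal, ← diagonal_one]
    exact congrArg _ (funext fun i => by fin_cases i <;> simp)
  have hrows : (lorentzFrame u v)ᵀᵀ * D * (lorentzFrame u v)ᵀ = D := by
    ext i j
    rw [transpose_mul_diagonal_mul_apply]
    fin_cases i <;> fin_cases j <;> simp [lorentzFrame, lorentzForm, D, h.left, h.right,
      h.orthogonal, hvu, cross_dot_cross, dotProduct_comm (u ⨯₃ v)]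
  rw [transpose_transpose] at hrows
  have hinv : lorentzFrame u v * D * ((lorentzFrame u v)ᵀ * D) = 1 := by
    rw [← Matrix.mul_assoc, hrows, hD]
  calc (lorentzFrame u v)ᵀ * D * lorentzFrame u v
      = (lorentzFrame u v)ᵀ * D * (lorentzFrame u v * D) * D := by
        simp only [Matrix.mul_assoc, hD, Matrix.mul_one]
    _ = D := by rw [mul_eq_one_comm.1 hinv, Matrix.one_mul]

theorem IsOrthonormalPair.det_lorentzFrame {u v : Fin 3 → R} (h : IsOrthonormalPair u v) :
    (lorentzFrame u v).det = 1 := by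
  have hcross : u ⨯₃ v ⬝ᵥ u ⨯₃ v = 1 := by
    rw [cross_dot_cross, h.left, h.right, h.orthogonal]
    ring
  have hminor : (lorentzFrame u v).submatrix Fin.succ Fin.succ = ![u ⨯₃ v, u, v] := by
    ext i
    fin_cases i <;> rfl
  rw [triple_product_eq_det, ← hminor] at hcross
  rw [det_succ_row_zero, Fin.sum_univ_succ]
  simpa [lorentzFrame] using hcross

theorem IsOrthonormalPair.sOplus13_lorentzFrame {u v : Fin 3 → ℝ} (h : IsOrthonormalPair u v) :
    SOplus13 (lorentzFrame u v) :=
  ⟨h.transpose_lorentzFrame_mul, h.det_lorentzFrame, by simp [lorentzFrame]⟩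

theorem forall_eq_or_forall_eq_neg_of_mul_eq_mul [IsDomain R] {ι : Type*} {p q : ι → R}
    (h : ∀ i j, p i * p j = q i * q j) : (∀ i, p i = q i) ∨ ∀ i, p i = -q i := by
  by_contra! hcon
  obtain ⟨⟨i, hi⟩, j, hj⟩ := hcon
  have hi' : p i = -q i := (mul_self_eq_mul_self_iff.1 (h i i)).resolve_left hi
  have hj' : p j = q j := (mul_self_eq_mul_self_iff.1 (h j j)).resolve_right hj
  have hqj : q j ≠ 0 := fun h0 => hj (by rw [hj', h0, neg_zero])
  have hij := h i j
  rw [hi', hj'] at hij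
  exact hi (hi'.trans (mul_right_cancel₀ hqj hij))

theorem IsOrthonormalPair.cross_dotProduct_mul_cross_dotProduct {J : R} (hJ : J ^ 2 = -1)
    {u v : Fin 3 → R} (h : IsOrthonormalPair u v) {x y : Fin 4 → R} (hxy : lorentzForm x y = 0)
    (hx : (u + J • v) ⬝ᵥ vecTail x = 0) (hy : (u + J • v) ⬝ᵥ vecTail y = 0) :
    (u ⨯₃ v ⬝ᵥ vecTail x) * (u ⨯₃ v ⬝ᵥ vecTail y) = x 0 * y 0 := by
  have hform := lorentzForm_mulVec h.transpose_lorentzFrame_mul x y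
  simp only [lorentzFrame_mulVec, lorentzForm_apply, cons_val] at hform
  rw [← lorentzForm_apply, hxy] at hform
  rw [add_dotProduct, smul_dotProduct, smul_eq_mul] at hx hy
  linear_combination hform - (u ⬝ᵥ vecTail y) * hx + J * (v ⬝ᵥ vecTail x) * hy
    - (v ⬝ᵥ vecTail x) * (v ⬝ᵥ vecTail y) * hJ

theorem mem_span_pair_null_iff (J : R) (x : Fin 4 → R) :
    x ∈ Submodule.span R {![1, -1, 0, 0], ![0, 0, 1, J]} ↔ x 1 = -x 0 ∧ x 3 = J * x 2 := by
  rw [Submodule.mem_span_pair]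
  constructor
  · rintro ⟨a, b, rfl⟩
    simp [mul_comm]
  · rintro ⟨h1, h3⟩
    refine ⟨x 0, x 2, funext fun i => ?_⟩
    fin_cases i <;> simp [h1, h3, mul_comm]

theorem lorentzFrame_smul_mulVec_mem_span {J σ : R} (hJ : J ^ 2 = -1) {u v : Fin 3 → R}
    {x : Fin 4 → R} (hx : (u + J • v) ⬝ᵥ vecTail x = 0) (hσ : σ * (u ⨯₃ v ⬝ᵥ vecTail x) = -x 0) :
    lorentzFrame u (σ • v) *ᵥ x ∈ Submodule.span R {![1, -1, 0, 0], ![0, 0, 1, σ * J]} := by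
  rw [add_dotProduct, smul_dotProduct, smul_eq_mul] at hx
  rw [mem_span_pair_null_iff, lorentzFrame_mulVec, map_smul, smul_dotProduct, smul_dotProduct]
  simp only [cons_val, smul_eq_mul]
  exact ⟨hσ, by linear_combination σ * (v ⬝ᵥ vecTail x) * hJ - σ * J * hx⟩

end LorentzFrame

theorem analyticOnNhd_mulVec {𝕜 E A m n : Type*} [NontriviallyNormedField 𝕜]
    [NormedAddCommGroup E] [NormedSpace 𝕜 E] [NormedCommRing A] [NormedAlgebra 𝕜 A] [Fintype n]
    {U : Set E} {M : E → Matrix m n A} {x : E → n → A}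
    (hM : ∀ i j, AnalyticOnNhd 𝕜 (fun z => M z i j) U)
    (hx : ∀ j, AnalyticOnNhd 𝕜 (fun z => x z j) U) (i : m) :
    AnalyticOnNhd 𝕜 (fun z => (M z *ᵥ x z) i) U :=
  fun z hz => Finset.analyticAt_fun_sum _ fun j _ => (hM i j z hz).mul (hx j z hz)

section RealFrame

variable {E : Type*} [NormedAddCommGroup E] [NormedSpace ℝ E] {U : Set E}

theorem analyticOnNhd_lorentzFrame {u v : E → Fin 3 → ℝ}
    (hu : ∀ i, AnalyticOnNhd ℝ (fun z => u z i) U) (hv : ∀ i, AnalyticOnNhd ℝ (fun z => v z i) U)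
    (i j : Fin 4) : AnalyticOnNhd ℝ (fun z => lorentzFrame (u z) (v z) i j) U := by
  have hw : ∀ k, AnalyticOnNhd ℝ (fun z => (u z ⨯₃ v z) k) U := fun k => by
    simp only [cross_apply]
    fin_cases k <;> exact ((hu _).mul (hv _)).sub ((hu _).mul (hv _))
  fin_cases i <;> refine Fin.cases analyticOnNhd_const (fun k => ?_) j
  exacts [analyticOnNhd_const, hw k, hu k, hv k]

theorem exists_isOrthonormalPair_forall_dotProduct_eq_zero {b : E → Fin 2 → Fin 4 → ℂ}
    (hb : ∀ k i, AnalyticOnNhd ℝ (fun z => b z k i) U) (hnull : ∀ z ∈ U, IsNullFrame (b z)) :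
    ∃ u v : E → Fin 3 → ℝ, (∀ i, AnalyticOnNhd ℝ (fun z => u z i) U) ∧
      (∀ i, AnalyticOnNhd ℝ (fun z => v z i) U) ∧ (∀ z ∈ U, IsOrthonormalPair (u z) (v z)) ∧
      ∀ z ∈ U, ∀ k, (ofReal ∘ u z + I • (ofReal ∘ v z)) ⬝ᵥ vecTail (b z k) = 0 := by
  have hanalytic : ∀ i, AnalyticOnNhd ℝ (fun z => spatialNullVector (b z) i) U := fun i =>
    ((hb 0 0).mul (hb 1 i.succ)).sub ((hb 1 0).mul (hb 0 i.succ))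
  obtain ⟨u, v, hu, hv, huv, ht⟩ := exists_analyticOnNhd_isOrthonormalPair hanalytic
    (fun z hz => (hnull z hz).spatialNullVector_dotProduct_self)
    fun z hz => (hnull z hz).spatialNullVector_ne_zero
  refine ⟨u, v, hu, hv, huv, fun z hz k => ?_⟩
  obtain ⟨c, hc⟩ := ht z
  rw [hc, smul_dotProduct, (hnull z hz).spatialNullVector_dotProduct_vecTail, smul_zero]

theorem exists_sign_forall_mul_cross_dotProduct (hU : IsOpen U) (hUc : IsPreconnected U)
    {b : E → Fin 2 → Fin 4 → ℂ} (hb : ∀ k i, AnalyticOnNhd ℝ (fun z => b z k i) U)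
    (hnull : ∀ z ∈ U, IsNullFrame (b z)) {u v : E → Fin 3 → ℝ}
    (hu : ∀ i, AnalyticOnNhd ℝ (fun z => u z i) U) (hv : ∀ i, AnalyticOnNhd ℝ (fun z => v z i) U)
    (huv : ∀ z ∈ U, IsOrthonormalPair (u z) (v z))
    (hperp : ∀ z ∈ U, ∀ k, (ofReal ∘ u z + I • (ofReal ∘ v z)) ⬝ᵥ vecTail (b z k) = 0) :
    ∃ σ : ℝ, (σ = 1 ∨ σ = -1) ∧ ∀ z ∈ U, ∀ k,
      σ * ((ofReal ∘ u z) ⨯₃ (ofReal ∘ v z) ⬝ᵥ vecTail (b z k)) = -b z k 0 := by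
  let c (k : Fin 2) (z : E) : ℂ := (ofReal ∘ u z) ⨯₃ (ofReal ∘ v z) ⬝ᵥ vecTail (b z k)
  have hc : ∀ k, AnalyticOnNhd ℝ (c k) U := fun k => by
    have hrow : c k = fun z => ((lorentzFrame (u z) (v z)).map ofRealHom *ᵥ b z k) 1 :=
      funext fun z => by rw [map_lorentzFrame, lorentzFrame_mulVec]; rfl
    rw [hrow]
    exact analyticOnNhd_mulVec (fun i j z hz =>
      (ofRealCLM.analyticAt _).fun_comp (analyticOnNhd_lorentzFrame hu hv i j z hz)) (hb k) 1
  have hsign : ∀ z ∈ U, (∀ k, c k z = b z k 0) ∨ ∀ k, c k z = -b z k 0 := fun z hz =>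
    forall_eq_or_forall_eq_neg_of_mul_eq_mul fun k l =>
      ((huv z hz).map ofRealHom).cross_dotProduct_mul_cross_dotProduct I_sq
        ((hnull z hz).isotropic k l) (hperp z hz k) (hperp z hz l)
  have hglobal := forall_eq_zero_or_forall_eq_zero hU hUc
    (fun k => ((hc k).sub (hb k 0)).continuousOn) (fun k => (hc k).add (hb k 0)) fun z hz =>
      (hsign z hz).imp (fun h k => sub_eq_zero.2 (h k)) fun h k => eq_neg_iff_add_eq_zero.1 (h k)
  rcases hglobal with h | h
  · refine ⟨-1, Or.inr rfl, fun z hz k => ?_⟩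
    rw [ofReal_neg, ofReal_one, neg_one_mul]
    exact congrArg _ (sub_eq_zero.1 (h z hz k))
  · refine ⟨1, Or.inl rfl, fun z hz k => ?_⟩
    rw [ofReal_one, one_mul]
    exact eq_neg_iff_add_eq_zero.2 (h z hz k)

theorem exists_sOplus13_forall_mulVec_mem_span (hU : IsOpen U) (hUc : IsPreconnected U)
    {b : E → Fin 2 → Fin 4 → ℂ} (hb : ∀ k i, AnalyticOnNhd ℝ (fun z => b z k i) U)
    (hnull : ∀ z ∈ U, IsNullFrame (b z)) :
    ∃ A : E → Matrix (Fin 4) (Fin 4) ℝ, (∀ i j, AnalyticOnNhd ℝ (fun z => A z i j) U) ∧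
      (∀ z ∈ U, SOplus13 (A z)) ∧ ∃ J : ℂ, (J = I ∨ J = -I) ∧ ∀ z ∈ U, ∀ k,
        (A z).map ofReal *ᵥ b z k ∈ Submodule.span ℂ {![1, -1, 0, 0], ![0, 0, 1, J]} := by
  obtain ⟨u, v, hu, hv, huv, hperp⟩ := exists_isOrthonormalPair_forall_dotProduct_eq_zero hb hnull
  obtain ⟨σ, hσ, hcross⟩ := exists_sign_forall_mul_cross_dotProduct hU hUc hb hnull hu hv huv hperp
  have hσσ : σ * σ = 1 := mul_self_eq_one_iff.2 hσ
  refine ⟨fun z => lorentzFrame (u z) (σ • v z),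
    analyticOnNhd_lorentzFrame hu fun i => analyticOnNhd_const.mul (hv i),
    fun z hz => ((huv z hz).smul_right hσσ).sOplus13_lorentzFrame, σ * I,
    hσ.imp (fun h => by simp [h]) fun h => by simp [h], fun z hz k => ?_⟩
  have hmap : (lorentzFrame (u z) (σ • v z)).map ofReal =
      lorentzFrame (ofReal ∘ u z) ((σ : ℂ) • (ofReal ∘ v z)) := by
    refine (map_lorentzFrame ofRealHom _ _).trans (congrArg _ (funext fun i => ?_))
    simp
  rw [hmap]
  exact lorentzFrame_smul_mulVec_mem_span I_sq (hperp z hz k) (hcross z hz k)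

end RealFrame

/-! ### Isotropic matrices -/

section Columns

variable {R m n ι : Type*} [CommRing R] [Fintype n]

theorem transpose_mul_mul_eq_zero_iff_of_isUnit [Fintype ι] [DecidableEq ι]
    {D S : Matrix n n R} {T : Matrix ι ι R} (hS : Sᵀ * D * S = D) (hT : IsUnit T)
    (M : Matrix n ι R) : (S * M * T)ᵀ * D * (S * M * T) = 0 ↔ Mᵀ * D * M = 0 := by
  have h : (S * M * T)ᵀ * D * (S * M * T) = Tᵀ * (Mᵀ * (Sᵀ * D * S) * M) * T := by
    simp only [transpose_mul, Matrix.mul_assoc]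
  rw [h, hS, hT.mul_left_eq_zero, (isUnit_transpose T |>.2 hT).mul_right_eq_zero]

theorem col_mul_mem {W : Submodule R (m → R)} {M : Matrix m n R} (hM : ∀ k, M.col k ∈ W)
    (T : Matrix n ι R) (j : ι) : (M * T).col j ∈ W := by
  have h : (M * T).col j = ∑ k, T k j • M.col k := by
    ext i
    simp [mul_apply, mul_comm]
  rw [h]
  exact W.sum_mem fun k _ => W.smul_mem _ (hM k)

theorem mulVec_mem_of_mem_span_range {W : Submodule R (m → R)} {M : Matrix m n R}
    {b : ι → n → R} (hb : ∀ k, M *ᵥ b k ∈ W) {x : n → R} (hx : x ∈ Submodule.span R (range b)) :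
    M *ᵥ x ∈ W :=
  (Submodule.span_le (p := W.comap M.mulVecLin)).2 (range_subset_iff.2 hb) hx

end Columns

section Isotropy

theorem transpose_mul_diagonal_mul_eq_zero_iff {R ι : Type*} [CommRing R]
    {B : Matrix (Fin 4) ι R} : Bᵀ * Matrix.diagonal ![(-1 : R), 1, 1, 1] * B = 0 ↔
      ∀ i j, lorentzForm (B.col i) (B.col j) = 0 := by
  simp only [← Matrix.ext_iff, transpose_mul_diagonal_mul_apply, Matrix.zero_apply]

theorem lorentzForm_eq_zero_of_mem_span_pair_null {R : Type*} [CommRing R] {J : R}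
    (hJ : J ^ 2 = -1) {x y : Fin 4 → R}
    (hx : x ∈ Submodule.span R {![1, -1, 0, 0], ![0, 0, 1, J]})
    (hy : y ∈ Submodule.span R {![1, -1, 0, 0], ![0, 0, 1, J]}) : lorentzForm x y = 0 := by
  rw [mem_span_pair_null_iff] at hx hy
  rw [lorentzForm_apply, hx.1, hx.2, hy.1, hy.2]
  linear_combination x 2 * y 2 * hJ

theorem SOplus13.transpose_map_mul {A : Matrix (Fin 4) (Fin 4) ℝ} (hA : SOplus13 A) :
    (A.map ofReal)ᵀ * I13C * A.map ofReal = I13C := by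
  have hI : I13.map ofRealHom = I13C := by
    ext i j
    fin_cases i <;> fin_cases j <;> simp [I13, I13C]
  have h := congrArg (fun M => M.map ofRealHom) hA.1
  rwa [Matrix.map_mul, Matrix.map_mul, hI, transpose_map] at h

variable {ι : Type*}

theorem SOplus13.transpose_mul_mul_eq_zero {A : Matrix (Fin 4) (Fin 4) ℝ} (hA : SOplus13 A) {J : ℂ}
    (hJ : J ^ 2 = -1) {B : Matrix (Fin 4) ι ℂ} (hB : ∀ j, (A.map ofReal * B).col j ∈
      Submodule.span ℂ {![1, -1, 0, 0], ![0, 0, 1, J]}) : Bᵀ * I13C * B = 0 :=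
  transpose_mul_diagonal_mul_eq_zero_iff.2 fun j k => by
    rw [← lorentzForm_mulVec hA.transpose_map_mul]
    exact lorentzForm_eq_zero_of_mem_span_pair_null hJ (hB j) (hB k)

variable {U : Set ℂ} {R : ℂ → Matrix (Fin 4) ι ℂ}
  {S : ℂ → Matrix (Fin 4) (Fin 4) ℂ}

theorem exists_sOplus13_forall_col_mem_span (hU : IsOpen U) (hUc : IsPreconnected U)
    (hR : ∀ i j, AnalyticOnNhd ℂ (fun z => R z i j) U)
    (hS : ∀ i j, AnalyticOnNhd ℝ (fun z => S z i j) U)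
    (hSform : ∀ z ∈ U, (S z)ᵀ * I13C * S z = I13C) (hnull : ∀ z ∈ U, (R z)ᵀ * I13C * R z = 0) :
    ∃ A : ℂ → Matrix (Fin 4) (Fin 4) ℝ, (∀ i j, AnalyticOnNhd ℝ (fun z => A z i j) U) ∧
      (∀ z ∈ U, SOplus13 (A z)) ∧ ∃ J : ℂ, (J = I ∨ J = -I) ∧ ∀ z ∈ U, ∀ j,
        ((A z).map ofReal * (S z * R z)).col j ∈
          Submodule.span ℂ {![1, -1, 0, 0], ![0, 0, 1, J]} := by
  obtain ⟨r, hr, hframe, hspan⟩ := exists_isNullFrame_forall_mem_span hU hUc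
    (x := fun j z => (R z).col j) (fun j => analyticOnNhd_pi_iff.2 fun i => hR i j)
    fun z hz => transpose_mul_diagonal_mul_eq_zero_iff.1 (hnull z hz)
  obtain ⟨A, hA, hSO, J, hJ, hmem⟩ := exists_sOplus13_forall_mulVec_mem_span hU hUc
    (b := fun z k => S z *ᵥ r z k)
    (fun k => analyticOnNhd_mulVec hS fun i z hz => (hr k i z hz).restrictScalars)
    fun z hz => (hframe z hz).mulVec (hSform z hz)
  refine ⟨A, hA, hSO, J, hJ, fun z hz j => ?_⟩
  rw [← Matrix.mul_assoc]
  refine mulVec_mem_of_mem_span_range (fun k => ?_) (hspan z hz j)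
  rw [← mulVec_mulVec]
  exact hmem z hz k

end Isotropy

theorem stmt1_general {ι : Type*} [Fintype ι] [DecidableEq ι] {U : Set ℂ} (hUo : IsOpen U)
    (hUc : IsPreconnected U) {B₁ R₁ : ℂ → Matrix (Fin 4) ι ℂ}
    {S₁ : ℂ → Matrix (Fin 4) (Fin 4) ℂ} {S₂ : ℂ → Matrix ι ι ℂ}
    (hR_hol : ∀ i j, AnalyticOn ℂ (fun z => R₁ z i j) U)
    (hS₁_an : ∀ i j, AnalyticOn ℝ (fun z => S₁ z i j) U)
    (hS₁ : ∀ z ∈ U, (S₁ z)ᵀ * I13C * S₁ z = I13C) (hS₂ : ∀ z ∈ U, IsUnit (S₂ z))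
    (hfact : ∀ z ∈ U, B₁ z = S₁ z * R₁ z * S₂ z) :
    (∀ z ∈ U, (B₁ z)ᵀ * I13C * B₁ z = 0) ↔
      ∃ A : ℂ → Matrix (Fin 4) (Fin 4) ℝ,
        (∀ i j, AnalyticOn ℝ (fun z => A z i j) U) ∧
        (∀ z ∈ U, SOplus13 (A z)) ∧
        ((∀ z ∈ U, ∀ j, ((A z).map ofReal * B₁ z).col j ∈
            Submodule.span ℂ {![1, -1, 0, 0], ![0, 0, 1, I]}) ∨
         (∀ z ∈ U, ∀ j, ((A z).map ofReal * B₁ z).col j ∈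
            Submodule.span ℂ {![1, -1, 0, 0], ![0, 0, 1, -I]})) := by
  simp only [hUo.analyticOn_iff_analyticOnNhd] at hR_hol hS₁_an ⊢
  constructor
  · intro hB
    have hR : ∀ z ∈ U, (R₁ z)ᵀ * I13C * R₁ z = 0 := fun z hz =>
      (transpose_mul_mul_eq_zero_iff_of_isUnit (hS₁ z hz) (hS₂ z hz) _).1 (hfact z hz ▸ hB z hz)
    obtain ⟨A, hA, hSO, J, hJ, hmem⟩ :=
      exists_sOplus13_forall_col_mem_span hUo hUc hR_hol hS₁_an hS₁ hR
    have hcol : ∀ z ∈ U, ∀ j, ((A z).map ofReal * B₁ z).col j ∈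
        Submodule.span ℂ {![1, -1, 0, 0], ![0, 0, 1, J]} := fun z hz => by
      rw [hfact z hz, ← Matrix.mul_assoc]
      exact col_mul_mem (hmem z hz) _
    exact ⟨A, hA, hSO, by rcases hJ with rfl | rfl <;> [left; right] <;> exact hcol⟩
  · rintro ⟨A, -, hSO, h | h⟩ z hz
    · exact (hSO z hz).transpose_mul_mul_eq_zero I_sq (h z hz)
    · exact (hSO z hz).transpose_mul_mul_eq_zero (by rw [neg_sq, I_sq]) (h z hz)

/-- Theorem 3.4: for a not-identically-zero real analytic `B₁ : U → Mat(4×n,ℂ)` on a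
contractible open `U ⊆ ℂ`, factoring as `B₁ = S₁ R₁ S₂` with `R₁` holomorphic,
`S₁` complex-Lorentz-orthogonal of determinant 1 and `S₂` complex-orthogonal of
determinant 1, the isotropy condition `B₁ᵀ I₁,₃ B₁ = 0` holds on `U` iff there is
a real analytic map `𝔸 : U → SO⁺(1,3)` taking all columns of `𝔸 B₁` into
`span_ℂ{(1,-1,0,0)ᵀ, (0,0,1,i)ᵀ}`, or all into `span_ℂ{(1,-1,0,0)ᵀ, (0,0,1,-i)ᵀ}`. -/
theorem stmt1 (n : ℕ) (U : Set ℂ) (hUo : IsOpen U) (hUc : ContractibleSpace U)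
    (B₁ R₁ : ℂ → Matrix (Fin 4) (Fin n) ℂ)
    (S₁ : ℂ → Matrix (Fin 4) (Fin 4) ℂ)
    (S₂ : ℂ → Matrix (Fin n) (Fin n) ℂ)
    (hB_an : ∀ i j, AnalyticOn ℝ (fun z => B₁ z i j) U)
    (hB_ne : ∃ z ∈ U, B₁ z ≠ 0)
    (hR_hol : ∀ i j, AnalyticOn ℂ (fun z => R₁ z i j) U)
    (hS₁_an : ∀ i j, AnalyticOn ℝ (fun z => S₁ z i j) U)
    (hS₂_an : ∀ i j, AnalyticOn ℝ (fun z => S₂ z i j) U)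
    (hS₁ : ∀ z ∈ U, (S₁ z)ᵀ * I13C * S₁ z = I13C ∧ (S₁ z).det = 1)
    (hS₂ : ∀ z ∈ U, (S₂ z)ᵀ * S₂ z = 1 ∧ (S₂ z).det = 1)
    (hfact : ∀ z ∈ U, B₁ z = S₁ z * R₁ z * S₂ z) :
    (∀ z ∈ U, (B₁ z)ᵀ * I13C * B₁ z = 0) ↔
      ∃ A : ℂ → Matrix (Fin 4) (Fin 4) ℝ,
        (∀ i j, AnalyticOn ℝ (fun z => A z i j) U) ∧
        (∀ z ∈ U, SOplus13 (A z)) ∧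
        ((∀ z ∈ U, ∀ j, (fun i => ((A z).map Complex.ofReal * B₁ z) i j) ∈
            Submodule.span ℂ ({![1, -1, 0, 0], ![0, 0, 1, Complex.I]} :
              Set (Fin 4 → ℂ))) ∨
         (∀ z ∈ U, ∀ j, (fun i => ((A z).map Complex.ofReal * B₁ z) i j) ∈
            Submodule.span ℂ ({![1, -1, 0, 0], ![0, 0, 1, -Complex.I]} :
              Set (Fin 4 → ℂ)))) := by
  have hpre : IsPreconnected U := isPreconnected_iff_preconnectedSpace.2 inferInstance
  exact stmt1_general hUo hpre hR_hol hS₁_an (fun z hz => (hS₁ z hz).1)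
    (fun z hz => IsUnit.of_mul_eq_one_right _ (hS₂ z hz).1) hfact
end
end

section
/- Every nonzero complex null vector b ∈ ℂ⁴ (i.e. b ≠ 0 with bᵀ I₁,₃ b = 0) can be mapped by a matrix in SO⁺(1,3) into one of the complex lines ℂ·(1,−1,0,0)ᵀ, ℂ·(0,0,1,i)ᵀ, or ℂ·(0,0,1,−i)ᵀ: there exists A ∈ SO⁺(1,3) and λ ∈ ℂ such that A·b = λ·(1,−1,0,0)ᵀ or A·b = λ·(0,0,1,i)ᵀ or A·b = λ·(0,0,1,−i)ᵀ. -/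
open Matrix Complex

noncomputable section

/-!
After multiplication by a phase the time coordinate of a null vector is a real number `a`. If its
spatial part is `u + iw`, nullity says `|u|² = a² + |w|²` and `u ⊥ w`. When `w = 0`, a rotation
taking `u` to `(-a, 0, 0)` suffices. When `w ≠ 0`, a rotation takes `u` and `w` to the second and
third spatial axes, and a boost in the plane of time and `u` removes `a`, shrinking `|u|` to `|w|`.
The line `ℂ·(0,0,1,-i)` lies in the orbit of `ℂ·(0,0,1,i)` under the rotation `diag(1,-1,1,-1)`.
-/

section DotProduct

variable {ι κ : Type*} [Fintype ι]

theorem map_ofReal_mulVec (M : Matrix κ ι ℝ) (v : ι → ℂ) :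
    M.map Complex.ofReal *ᵥ v =
      fun i => ⟨(M *ᵥ fun j => (v j).re) i, (M *ᵥ fun j => (v j).im) i⟩ := by
  ext i
  apply Complex.ext <;> simp [mulVec, dotProduct]

theorem dotProduct_self_eq_ofReal_iff {v : ι → ℂ} {r : ℝ} :
    v ⬝ᵥ v = r ↔
      (fun i => (v i).re) ⬝ᵥ (fun i => (v i).re) = r + (fun i => (v i).im) ⬝ᵥ (fun i => (v i).im) ∧
      (fun i => (v i).re) ⬝ᵥ (fun i => (v i).im) = 0 := by
  have hre : (v ⬝ᵥ v).re = (fun i => (v i).re) ⬝ᵥ (fun i => (v i).re) -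
      (fun i => (v i).im) ⬝ᵥ (fun i => (v i).im) := by
    simp [dotProduct]
  have him : (v ⬝ᵥ v).im = 2 * (fun i => (v i).re) ⬝ᵥ (fun i => (v i).im) := by
    simp [dotProduct, Finset.sum_add_distrib, mul_comm, two_mul]
  rw [Complex.ext_iff, hre, him, ofReal_re, ofReal_im, sub_eq_iff_eq_add, mul_eq_zero]
  simp

theorem exists_sq_eq_dotProduct_self {v : ι → ℝ} (hv : v ≠ 0) : ∃ r > 0, v ⬝ᵥ v = r ^ 2 := by
  have hpos : 0 < v ⬝ᵥ v := by simpa using dotProduct_star_self_pos_iff.mpr hv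
  exact ⟨√(v ⬝ᵥ v), Real.sqrt_pos.mpr hpos, (Real.sq_sqrt hpos.le).symm⟩

theorem inv_smul_dotProduct_inv_smul_self {K : Type*} [Field K] {v : ι → K} {r : K}
    (hr : r ≠ 0) (hv : v ⬝ᵥ v = r ^ 2) : (r⁻¹ • v) ⬝ᵥ (r⁻¹ • v) = 1 := by
  rw [smul_dotProduct, dotProduct_smul, hv, smul_eq_mul, smul_eq_mul]
  field_simp

theorem exists_unit_orthogonal (hι : 1 < Fintype.card ι) (n : ι → ℝ) :
    ∃ e : ι → ℝ, e ⬝ᵥ e = 1 ∧ n ⬝ᵥ e = 0 := by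
  obtain ⟨w, hw, hw0⟩ := (Submodule.ne_bot_iff _).mp <|
    LinearMap.ker_ne_bot_of_finrank_lt (f := dotProductBilin ℝ ℝ n) (by simpa using hι)
  obtain ⟨r, hr, hwr⟩ := exists_sq_eq_dotProduct_self hw0
  have hnw : n ⬝ᵥ w = 0 := hw
  exact ⟨r⁻¹ • w, inv_smul_dotProduct_inv_smul_self hr.ne' hwr, by simp [hnw]⟩

end DotProduct

section Rotation

theorem of_cross_mem_specialOrthogonalGroup {K : Type*} [CommRing K] {e f : Fin 3 → K}
    (he : e ⬝ᵥ e = 1) (hf : f ⬝ᵥ f = 1) (hef : e ⬝ᵥ f = 0) :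
    of ![e ⨯₃ f, e, f] ∈ specialOrthogonalGroup (Fin 3) K := by
  have hfe : f ⬝ᵥ e = 0 := by rwa [dotProduct_comm]
  have hcross : e ⨯₃ f ⬝ᵥ e ⨯₃ f = 1 := by simp [cross_dot_cross, he, hf, hef]
  have hmul : of ![e ⨯₃ f, e, f] * (of ![e ⨯₃ f, e, f])ᵀ = 1 := by
    ext i j
    change ![e ⨯₃ f, e, f] i ⬝ᵥ ![e ⨯₃ f, e, f] j = _
    fin_cases i <;> fin_cases j <;>
      simp [he, hf, hef, hfe, hcross, dotProduct_comm (e ⨯₃ f)]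
  have hdet : (of ![e ⨯₃ f, e, f]).det = 1 := by
    rw [← hcross, triple_product_eq_det]; rfl
  exact mem_specialOrthogonalGroup_iff.mpr ⟨(mem_orthogonalGroup_iff _ _).mpr hmul, hdet⟩

theorem exists_orthonormal_cross_eq {n : Fin 3 → ℝ} (hn : n ⬝ᵥ n = 1) :
    ∃ e f : Fin 3 → ℝ, e ⬝ᵥ e = 1 ∧ f ⬝ᵥ f = 1 ∧ e ⬝ᵥ f = 0 ∧ e ⨯₃ f = n := by
  obtain ⟨e, he, hne⟩ := exists_unit_orthogonal (by simp) n
  refine ⟨e, n ⨯₃ e, he, ?_, dot_cross_self n e, ?_⟩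
  · simp [cross_dot_cross, hn, he, hne]
  · simp [cross_cross_eq_smul_sub_smul', he, hne]

theorem exists_rotation_mulVec_eq {u : Fin 3 → ℝ} {a : ℝ} (hu : u ⬝ᵥ u = a ^ 2) :
    ∃ R ∈ specialOrthogonalGroup (Fin 3) ℝ, R *ᵥ u = ![a, 0, 0] := by
  rcases eq_or_ne a 0 with rfl | ha
  · have hu0 : u = 0 := dotProduct_self_eq_zero.mp (by simpa using hu)
    exact ⟨1, one_mem _, by ext i; fin_cases i <;> simp [hu0]⟩
  obtain ⟨e, f, he, hf, hef, hcross⟩ :=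
    exists_orthonormal_cross_eq (inv_smul_dotProduct_inv_smul_self ha hu)
  have hu' : u = a • e ⨯₃ f := by rw [hcross, smul_inv_smul₀ ha]
  refine ⟨_, of_cross_mem_specialOrthogonalGroup he hf hef, ?_⟩
  simp [hu', cons_mulVec, cross_dot_cross, he, hf, hef]

theorem exists_rotation_mulVec_eq_of_orthogonal {u w : Fin 3 → ℝ} {p q : ℝ} (hp : p ≠ 0)
    (hq : q ≠ 0) (hu : u ⬝ᵥ u = p ^ 2) (hw : w ⬝ᵥ w = q ^ 2) (huw : u ⬝ᵥ w = 0) :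
    ∃ R ∈ specialOrthogonalGroup (Fin 3) ℝ, R *ᵥ u = ![0, p, 0] ∧ R *ᵥ w = ![0, 0, q] := by
  refine ⟨_, of_cross_mem_specialOrthogonalGroup (inv_smul_dotProduct_inv_smul_self hp hu)
    (inv_smul_dotProduct_inv_smul_self hq hw) (by simp [huw]), ?_, ?_⟩
  · have hwu : w ⬝ᵥ u = 0 := by rwa [dotProduct_comm]
    simp [cons_mulVec, dotProduct_comm (u ⨯₃ w), hwu, hu, pow_two, hp]
  · simp [cons_mulVec, dotProduct_comm (u ⨯₃ w), huw, hw, pow_two, hq]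

end Rotation

section SpatialBlock

variable {K : Type*} [Semiring K] {n : ℕ}

/-- The block matrix `diag(1, R)`: the linear map that fixes the time axis `e₀` and acts by `R`
on the spatial coordinates. -/
def spatialBlock (R : Matrix (Fin n) (Fin n) K) : Matrix (Fin (n + 1)) (Fin (n + 1)) K :=
  of (vecCons (vecCons 1 0) fun i => vecCons 0 (R i))

@[simp]
theorem spatialBlock_apply_zero_zero (R : Matrix (Fin n) (Fin n) K) : spatialBlock R 0 0 = 1 := rfl

@[simp]
theorem spatialBlock_apply_zero_succ (R : Matrix (Fin n) (Fin n) K) (j : Fin n) :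
    spatialBlock R 0 j.succ = 0 := rfl

@[simp]
theorem spatialBlock_apply_succ_zero (R : Matrix (Fin n) (Fin n) K) (i : Fin n) :
    spatialBlock R i.succ 0 = 0 := rfl

@[simp]
theorem spatialBlock_apply_succ_succ (R : Matrix (Fin n) (Fin n) K) (i j : Fin n) :
    spatialBlock R i.succ j.succ = R i j := rfl

theorem spatialBlock_mulVec_vecCons (R : Matrix (Fin n) (Fin n) K) (a : K) (v : Fin n → K) :
    spatialBlock R *ᵥ vecCons a v = vecCons a (R *ᵥ v) := by
  ext i
  cases i using Fin.cases <;> simp [mulVec, dotProduct, Fin.sum_univ_succ]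

theorem map_spatialBlock {L : Type*} [Semiring L] (φ : K →+* L) (R : Matrix (Fin n) (Fin n) K) :
    (spatialBlock R).map φ = spatialBlock (R.map φ) := by
  ext i j
  cases i using Fin.cases <;> cases j using Fin.cases <;> simp

theorem spatialBlock_transpose (R : Matrix (Fin n) (Fin n) K) :
    (spatialBlock R)ᵀ = spatialBlock Rᵀ := by
  ext i j
  cases i using Fin.cases <;> cases j using Fin.cases <;> simp

theorem spatialBlock_mul (R S : Matrix (Fin n) (Fin n) K) :
    spatialBlock R * spatialBlock S = spatialBlock (R * S) := by
  ext i j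
  cases i using Fin.cases <;> cases j using Fin.cases <;>
    simp [mul_apply, Fin.sum_univ_succ]

theorem spatialBlock_one : spatialBlock (1 : Matrix (Fin n) (Fin n) K) = 1 := by
  ext i j
  cases i using Fin.cases <;> cases j using Fin.cases <;>
    simp [one_apply, (Fin.succ_ne_zero _).symm]

theorem det_spatialBlock {S : Type*} [CommRing S] (R : Matrix (Fin n) (Fin n) S) :
    (spatialBlock R).det = R.det := by
  have hminor : (spatialBlock R).submatrix Fin.succ Fin.succ = R := rfl
  simp [det_succ_row_zero, Fin.sum_univ_succ, hminor]

end SpatialBlock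

section Lorentz

theorem I13_mul_spatialBlock (R : Matrix (Fin 3) (Fin 3) ℝ) :
    I13 * spatialBlock R = spatialBlock R * I13 := by
  ext i j
  rw [I13, diagonal_mul, mul_diagonal]
  fin_cases i <;> fin_cases j <;> simp [spatialBlock]

theorem SOplus13_one : SOplus13 1 := by simp [SOplus13]

theorem SOplus13.mul_spatialBlock {A : Matrix (Fin 4) (Fin 4) ℝ} (hA : SOplus13 A)
    {R : Matrix (Fin 3) (Fin 3) ℝ} (hR : R ∈ specialOrthogonalGroup (Fin 3) ℝ) :
    SOplus13 (A * spatialBlock R) := by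
  obtain ⟨hform, hdet, hpos⟩ := hA
  have hRR : Rᵀ * R = 1 := (mem_orthogonalGroup_iff' _ _).mp hR.1
  refine ⟨?_, ?_, ?_⟩
  · calc (A * spatialBlock R)ᵀ * I13 * (A * spatialBlock R)
        = spatialBlock Rᵀ * (Aᵀ * I13 * A) * spatialBlock R := by
          simp only [transpose_mul, spatialBlock_transpose, Matrix.mul_assoc]
      _ = spatialBlock (Rᵀ * R) * I13 := by
          rw [hform, Matrix.mul_assoc, I13_mul_spatialBlock, ← Matrix.mul_assoc, spatialBlock_mul]
      _ = I13 := by rw [hRR, spatialBlock_one, Matrix.one_mul]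
  · rw [det_mul, hdet, det_spatialBlock, (mem_specialOrthogonalGroup_iff.mp hR).2, _root_.one_mul]
  · simpa [mul_apply, Fin.sum_univ_succ] using hpos

/-- The Lorentz boost in the `(x₀, x₂)`-plane, with `c` and `s` in the roles of the hyperbolic
cosine and sine of the rapidity. -/
def boost (c s : ℝ) : Matrix (Fin 4) (Fin 4) ℝ :=
  !![c, 0, -s, 0; 0, 1, 0, 0; -s, 0, c, 0; 0, 0, 0, 1]

theorem SOplus13_boost {c s : ℝ} (hc : 0 < c) (hcs : c ^ 2 = s ^ 2 + 1) :
    SOplus13 (boost c s) := by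
  refine ⟨?_, ?_, hc⟩
  · ext i j
    rw [I13, mul_apply]
    simp only [mul_diagonal]
    fin_cases i <;> fin_cases j <;> simp [boost, Fin.sum_univ_four] <;> linarith
  · have hdet : (boost c s).det = c ^ 2 - s ^ 2 := by
      simp [boost, det_succ_row_zero, Fin.sum_univ_succ, Fin.succAbove, pow_two, sub_eq_add_neg]
    rw [hdet, hcs, add_sub_cancel_left]

theorem map_boost_mulVec (c s : ℝ) (t x y z : ℂ) :
    (boost c s).map Complex.ofReal *ᵥ ![t, x, y, z] =
      ![c * t - s * y, x, c * y - s * t, z] := by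
  ext i
  fin_cases i <;> simp [boost, mulVec, dotProduct, Fin.sum_univ_four, sub_eq_add_neg, add_comm]

theorem map_boost_div_mulVec {a p q : ℝ} (hq : q ≠ 0) (h : p ^ 2 = a ^ 2 + q ^ 2) (x z : ℂ) :
    (boost (p / q) (a / q)).map Complex.ofReal *ᵥ ![(a : ℂ), x, p, z] = ![0, x, q, z] := by
  have htime : p / q * a - a / q * p = 0 := by ring
  have hspace : p / q * p - a / q * a = q := by
    field_simp
    linarith
  rw [map_boost_mulVec]
  norm_cast
  rw [htime, hspace, ofReal_zero]

theorem map_mul_spatialBlock_mulVec_vecCons (A : Matrix (Fin 4) (Fin 4) ℝ)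
    (R : Matrix (Fin 3) (Fin 3) ℝ) (a : ℂ) (v : Fin 3 → ℂ) :
    (A * spatialBlock R).map Complex.ofReal *ᵥ vecCons a v =
      A.map Complex.ofReal *ᵥ vecCons a (R.map Complex.ofReal *ᵥ v) := by
  have hmap : (A * spatialBlock R).map Complex.ofReal =
      A.map Complex.ofReal * spatialBlock (R.map Complex.ofReal) :=
    (Matrix.map_mul (f := ofRealHom)).trans (congrArg _ (map_spatialBlock ofRealHom R))
  rw [hmap, ← mulVec_mulVec, spatialBlock_mulVec_vecCons]

theorem dotProduct_I13C_mulVec_vecCons (a : ℂ) (v : Fin 3 → ℂ) :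
    vecCons a v ⬝ᵥ I13C *ᵥ vecCons a v = v ⬝ᵥ v - a ^ 2 := by
  rw [I13C, cons_dotProduct, sub_eq_neg_add]
  simp [dotProduct, mulVec_diagonal, Fin.sum_univ_succ, vecHead, vecTail, pow_two]

theorem exists_eq_smul_vecCons_ofReal {n : ℕ} (b : Fin (n + 1) → ℂ) :
    ∃ (z : ℂ) (a : ℝ) (v : Fin n → ℂ), z ≠ 0 ∧ b = z • vecCons (a : ℂ) v := by
  refine ⟨exp (arg (b 0) * I), ‖b 0‖, (exp (arg (b 0) * I))⁻¹ • vecTail b, exp_ne_zero _, ?_⟩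
  rw [smul_cons, smul_inv_smul₀ (exp_ne_zero _), smul_eq_mul, mul_comm, norm_mul_exp_arg_mul_I]
  exact (cons_head_tail b).symm

variable {v : Fin 3 → ℂ} {a : ℝ}

theorem exists_SOplus13_mulVec_eq_of_im_eq_zero (hv : v ⬝ᵥ v = (a : ℂ) ^ 2)
    (him : (fun i => (v i).im) = 0) :
    ∃ A, SOplus13 A ∧ A.map Complex.ofReal *ᵥ vecCons (a : ℂ) v = (a : ℂ) • ![1, -1, 0, 0] := by
  have hre : (fun i => (v i).re) ⬝ᵥ (fun i => (v i).re) = (-a) ^ 2 := by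
    simpa [him] using (dotProduct_self_eq_ofReal_iff.mp (hv.trans (ofReal_pow a 2).symm)).1
  obtain ⟨R, hR, hRre⟩ := exists_rotation_mulVec_eq hre
  refine ⟨1 * spatialBlock R, SOplus13_one.mul_spatialBlock hR, ?_⟩
  rw [map_mul_spatialBlock_mulVec_vecCons, map_ofReal_mulVec R, hRre, him]
  ext i
  fin_cases i <;> simp [Complex.ext_iff]

theorem exists_SOplus13_mulVec_eq_of_im_ne_zero (hv : v ⬝ᵥ v = (a : ℂ) ^ 2)
    (him : (fun i => (v i).im) ≠ 0) :
    ∃ A, ∃ q : ℝ, SOplus13 A ∧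
      A.map Complex.ofReal *ᵥ vecCons (a : ℂ) v = (q : ℂ) • ![0, 0, 1, I] := by
  obtain ⟨hre, horth⟩ := dotProduct_self_eq_ofReal_iff.mp (hv.trans (ofReal_pow a 2).symm)
  obtain ⟨q, hq, him_sq⟩ := exists_sq_eq_dotProduct_self him
  rw [him_sq] at hre
  have hre_ne : (fun i => (v i).re) ≠ 0 := by
    intro h
    rw [h, zero_dotProduct] at hre
    nlinarith
  obtain ⟨p, hp, hre_sq⟩ := exists_sq_eq_dotProduct_self hre_ne
  have hpq : p ^ 2 = a ^ 2 + q ^ 2 := hre_sq.symm.trans hre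
  obtain ⟨R, hR, hRre, hRim⟩ :=
    exists_rotation_mulVec_eq_of_orthogonal hp.ne' hq.ne' hre_sq him_sq horth
  have hRv : R.map Complex.ofReal *ᵥ v = ![0, (p : ℂ), q * I] := by
    rw [map_ofReal_mulVec, hRre, hRim]
    ext i
    fin_cases i <;> simp [Complex.ext_iff]
  have hboost : SOplus13 (boost (p / q) (a / q)) :=
    SOplus13_boost (div_pos hp hq) (by field_simp; exact hpq)
  refine ⟨_, q, hboost.mul_spatialBlock hR, ?_⟩
  rw [map_mul_spatialBlock_mulVec_vecCons, hRv, map_boost_div_mulVec hq.ne' hpq]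
  simp

end Lorentz

theorem stmt2_general (b : Fin 4 → ℂ) (hnull : dotProduct b (I13C.mulVec b) = 0) :
    ∃ (A : Matrix (Fin 4) (Fin 4) ℝ) (lam : ℂ), SOplus13 A ∧
      ((A.map Complex.ofReal).mulVec b = lam • ![1, -1, 0, 0] ∨
       (A.map Complex.ofReal).mulVec b = lam • ![0, 0, 1, Complex.I]) := by
  obtain ⟨z, a, v, hz, rfl⟩ := exists_eq_smul_vecCons_ofReal b
  have hv : v ⬝ᵥ v = (a : ℂ) ^ 2 := by
    rw [mulVec_smul, smul_dotProduct, dotProduct_smul, dotProduct_I13C_mulVec_vecCons] at hnull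
    simpa [hz, sub_eq_zero] using hnull
  by_cases him : (fun i => (v i).im) = 0
  · obtain ⟨A, hA, hAv⟩ := exists_SOplus13_mulVec_eq_of_im_eq_zero hv him
    exact ⟨A, z * a, hA, .inl (by rw [mulVec_smul, hAv, mul_smul])⟩
  · obtain ⟨A, q, hA, hAv⟩ := exists_SOplus13_mulVec_eq_of_im_ne_zero hv him
    exact ⟨A, z * q, hA, .inr (by rw [mulVec_smul, hAv, mul_smul])⟩

/-- Every nonzero complex null vector in `ℂ⁴` can be mapped by a matrix in `SO⁺(1,3)`
into one of the complex lines `ℂ·(1,-1,0,0)ᵀ`, `ℂ·(0,0,1,i)ᵀ` or `ℂ·(0,0,1,-i)ᵀ`. -/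
theorem stmt2 (b : Fin 4 → ℂ) (hb : b ≠ 0)
    (hnull : dotProduct b (I13C.mulVec b) = 0) :
    ∃ (A : Matrix (Fin 4) (Fin 4) ℝ) (lam : ℂ), SOplus13 A ∧
      ((A.map Complex.ofReal).mulVec b = lam • ![1, -1, 0, 0] ∨
       (A.map Complex.ofReal).mulVec b = lam • ![0, 0, 1, Complex.I] ∨
       (A.map Complex.ofReal).mulVec b = lam • ![0, 0, 1, -Complex.I]) := by
  obtain ⟨A, lam, hA, h⟩ := stmt2_general b hnull
  exact ⟨A, lam, hA, h.imp_right .inl⟩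
end
end
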